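/- arXiv:2604.13967 — 4 statements merged into one kernel-verified Lean document; each statement's English description precedes it below -/
import Mathlib

section
/- Let q = 2^m where m ≥ 4 is an even integer, let F(x) = x^{3q-2} be the power function over F_{q^2}, and for b ∈ F_{q^2} let δ(1, b) denote the number of x ∈ F_{q^2} with F(x + 1) + F(x) = b. Let τ_m be the rational sequence defined by τ_1 = 1/2, τ_2 = -7/4, and τ_m = (1/2)τ_{m-1} - τ_{m-2} for m ≥ 3, and for each nonnegative integer i let ω_i denote the number of b ∈ F_{q^2} with δ(1, b) = i. Then ω_0 = (5q^2 + (4 - τ_m)q - 7)/8, ω_2 = (q^2 + (τ_m - 2)q - 1)/4, ω_4 = (q^2 - τ_m·q + 1)/8, ω_q = 1, and ω_i = 0 for every other i. -/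
/-!
Write `D(x) = (x + 1) ^ (3q - 2) + x ^ (3q - 2)` and `x̄ = x ^ q`. The subfield of order
`q` is modelled by a field `F` with an algebra structure `F → K`, and `U` (`circ`) denotes the
elements of `K` of norm one.

**Fibres.** On the subfield the power map is the identity, so `D = 1` there. For `x` outside the subfield put
`a = x̄ / x` and `b = (x̄ + 1) / (x + 1)`. This identifies such `x` with the ordered pairs of distinct
elements of `U \ {1}`, and `D(x) = 1 + (1 + a)(1 + b)(1 + a + b)`. As `m` is even, the primitive
cube roots of unity lie in the subfield and not in `U`, so no three elements of `U` add up to `0`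
(`no_cube`). Hence `D(x) = 1` exactly on the subfield. If `D(x) = D(y)` with `y ∉ {x, x + 1}`, then
the sum of the four associated elements lies in `U` (`gg_sum`). A third class `{z, z + 1}` in the
same fibre would give three elements of `U` with sum zero, so every fibre other than that of `1`
has `0`, `2` or `4` elements (`card_fib`).

**Counting fibres of size four.** Dividing by the sum `s ∈ U`, the collisions `(x, y)` correspond
bijectively to quadruples in `U ^ 4` with sum `1`, as `s` is determined by the normalized quadruple
(`card_colls`). Therefore `8 ω₄` is the number of these quadruples, and a character sum
computation gives `(q + 1)² - Kl(w)²`, where `w` is a primitive cube root of unity and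
`Kl(w) = ∑_{x ≠ 0} χ(x + w / x)` (`card_quads`). Together with `ω₀ + ω₂ + ω₄ + 1 = q²` and
`2 ω₂ + 4 ω₄ = q² - q` this determines the spectrum in terms of `Kl(w)`.

**The Kloosterman sum.** Since `w` lies in the field with four elements, `Kl(w)` over the field with
`q = 4 ^ n` elements is the `n`-th coefficient of the logarithmic derivative of the `L`-function of
a multiplicative function on monic polynomials over that small field (`kl_eq_Lam`). This
`L`-function is the polynomial `1 - T + 4 T²`, so the identity `T L' = Λ L` (`von_mangoldt`) gives
a second order recursion. Its solution is `Kl(w) = - 2 ^ n τ_n` (`Lam_eq_tau`), and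
`τ_{2n} = τ_n² - 2` (`tau_double`) turns `Kl(w)²` into `q (τ_m + 2)`.
-/

set_option linter.unusedSectionVars false

/-! ### The quadratic additive character in characteristic two -/

namespace Niho
section AS
variable {F : Type*} [Field F] [Fintype F] [CharP F 2]

open Classical in
/-- The nontrivial additive character `x ↦ (-1) ^ Tr(x)`, where `Tr` is the absolute trace. It is
encoded through Hilbert 90: the value is `1` exactly on the elements of the form `y ^ 2 + y`. -/
noncomputable def chi (c : F) : ℤ := if ∃ y, y ^ 2 + y = c then 1 else -1

/-- The Artin–Schreier map `y ↦ y ^ 2 + y`, as a homomorphism of additive groups. -/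
def asHom (F : Type*) [Field F] [CharP F 2] : F →+ F where
  toFun y := y ^ 2 + y
  map_zero' := by simp
  map_add' x y := by rw [CharTwo.add_sq]; ring

/-- The kernel of the Artin–Schreier map is `{0, 1}`, so its image has index two. -/
lemma asHom_index : (asHom F).range.index = 2 := by
  classical
  have hker : Nat.card (asHom F).ker = 2 := by
    have : ((asHom F).ker : Set F) = {0, 1} := by
      ext y
      simp only [SetLike.mem_coe, AddMonoidHom.mem_ker, Set.mem_insert_iff, Set.mem_singleton_iff]
      change y ^ 2 + y = 0 ↔ _
      rw [show y ^ 2 + y = y * (y + 1) by ring, mul_eq_zero, CharTwo.add_eq_zero]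
    have h2 : Nat.card ((asHom F).ker : Set F) = 2 := by
      rw [this, Nat.card_coe_set_eq, Set.ncard_pair zero_ne_one]
    exact h2
  have h1 := AddSubgroup.card_mul_index (asHom F).ker
  have h2 := AddSubgroup.card_mul_index (asHom F).range
  rw [AddSubgroup.index_ker, hker] at h1
  have hpos : 0 < Nat.card (asHom F).range := Nat.card_pos
  rw [← h1, mul_comm] at h2
  exact Nat.eq_of_mul_eq_mul_right hpos h2

lemma chi_eq_one {c : F} : chi c = 1 ↔ ∃ y, y ^ 2 + y = c := by
  unfold chi; split_ifs with h <;> simp [h]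

lemma chi_cases (c : F) : chi c = 1 ∨ chi c = -1 := by
  unfold chi; split_ifs <;> simp

lemma chi_add (a b : F) : chi (a + b) = chi a * chi b := by
  have h := AddSubgroup.add_mem_iff_of_index_two (asHom_index (F := F)) (a := a) (b := b)
  have e : ∀ c : F, c ∈ (asHom F).range ↔ ∃ y, y ^ 2 + y = c := fun c => Iff.rfl
  rw [e, e, e] at h
  unfold chi
  split_ifs <;> simp_all

lemma chi_zero : chi (0 : F) = 1 := chi_eq_one.2 ⟨0, by simp⟩

lemma chi_as (y : F) : chi (y ^ 2 + y) = 1 := chi_eq_one.2 ⟨y, rfl⟩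

lemma chi_sq (c : F) : chi (c ^ 2) = chi c := by
  have h := chi_as c
  rw [chi_add] at h
  rcases chi_cases c with h1 | h1 <;> rw [h1] at h ⊢ <;> linarith

lemma chi_mul_self (c : F) : chi c * chi c = 1 := by
  rcases chi_cases c with h1 | h1 <;> rw [h1] <;> norm_num

lemma exists_chi_neg : ∃ c : F, chi c = -1 := by
  by_contra! h
  have : (asHom F).range = ⊤ := by
    ext c
    simp only [AddSubgroup.mem_top, iff_true]
    exact chi_eq_one.1 ((chi_cases c).resolve_right (h c))
  have h2 := asHom_index (F := F)
  rw [this, AddSubgroup.index_top] at h2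
  omega

lemma sum_chi : ∑ x : F, chi x = 0 := by
  obtain ⟨c, hc⟩ := exists_chi_neg (F := F)
  have h : ∑ x : F, chi (x + c) = ∑ x : F, chi x := Equiv.sum_comp (Equiv.addRight c) chi
  simp_rw [chi_add, hc] at h
  rw [← Finset.sum_mul] at h
  linarith

lemma sum_chi_mul {a : F} (ha : a ≠ 0) : ∑ x : F, chi (a * x) = 0 := by
  rw [← sum_chi (F := F)]
  exact Equiv.sum_comp (Equiv.mulLeft₀ a ha) chi

/-- The number of solutions of an Artin–Schreier equation. -/
lemma card_as [DecidableEq F] (c : F) :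
    ((Finset.univ.filter fun y : F => y ^ 2 + y = c).card : ℤ) = 1 + chi c := by
  unfold chi
  split_ifs with h
  · obtain ⟨z, hz⟩ := h
    have : (Finset.univ.filter fun y : F => y ^ 2 + y = c) = {z, z + 1} := by
      ext y
      simp only [Finset.mem_filter, Finset.mem_univ, true_and, Finset.mem_insert,
        Finset.mem_singleton]
      rw [← hz, ← CharTwo.add_eq_zero, ← CharTwo.add_eq_zero (a := y) (b := z),
        ← CharTwo.add_eq_zero (a := y) (b := z + 1), ← mul_eq_zero]
      have : y ^ 2 + y + (z ^ 2 + z) = (y + z) * (y + (z + 1)) := by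
        linear_combination (-(y * z)) * (CharTwo.two_eq_zero (R := F))
      rw [this]
    rw [this, Finset.card_pair (by simp)]
    norm_num
  · rw [Finset.card_eq_zero.2]
    · simp
    · ext y; simp; exact fun hy => h ⟨y, hy⟩

end AS
end Niho

/-! ### Kloosterman sums -/

namespace Niho
open Finset
section Kl
variable {F : Type*} [Field F] [Fintype F] [CharP F 2] [DecidableEq F]

/-- The Kloosterman sum `∑_{x ≠ 0} χ(x + a / x)`. -/
noncomputable def Kl (a : F) : ℤ := ∑ x ∈ univ.erase (0 : F), chi (x + a * x⁻¹)

lemma sum_erase_zero (f : F → ℤ) : ∑ x ∈ univ.erase (0 : F), f x = ∑ x, f x - f 0 := by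
  rw [← Finset.add_sum_erase univ f (mem_univ 0)]; ring

lemma sum_erase_mul (f : F → ℤ) {b : F} (hb : b ≠ 0) :
    ∑ x ∈ univ.erase (0 : F), f (b * x) = ∑ x ∈ univ.erase (0 : F), f x := by
  rw [sum_erase_zero, sum_erase_zero, mul_zero]
  congr 1
  exact Equiv.sum_comp (Equiv.mulLeft₀ b hb) f

lemma sum_erase_inv (f : F → ℤ) :
    ∑ x ∈ univ.erase (0 : F), f x⁻¹ = ∑ x ∈ univ.erase (0 : F), f x := by
  rw [sum_erase_zero, sum_erase_zero, inv_zero]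
  congr 1
  exact Equiv.sum_comp (Equiv.inv F) f

lemma sum_chi_erase {a : F} (ha : a ≠ 0) : ∑ x ∈ univ.erase (0 : F), chi (a * x) = -1 := by
  rw [sum_erase_zero, sum_chi_mul ha, mul_zero, chi_zero]; norm_num

lemma kl_zero : Kl (0 : F) = -1 := by
  unfold Kl
  simpa using sum_chi_erase (one_ne_zero (α := F))

/-- Rescaling the variable reduces a two-parameter Kloosterman sum to `Kl`. -/
lemma kl_gen {a b : F} (h : a ≠ 0 ∨ b ≠ 0) :
    ∑ x ∈ univ.erase (0 : F), chi (a * x + b * x⁻¹) = Kl (a * b) := by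
  by_cases ha : a = 0
  · have hb : b ≠ 0 := by tauto
    subst ha
    rw [zero_mul, kl_zero, ← sum_chi_erase hb, ← sum_erase_inv]
    simp
  · rw [← sum_erase_mul _ (inv_ne_zero ha)]
    unfold Kl
    apply sum_congr rfl
    intro x hx
    rw [mul_inv, inv_inv, mul_inv_cancel_left₀ ha]
    congr 2; ring

lemma sum_kl : ∑ a : F, Kl a = 0 := by
  unfold Kl
  rw [sum_comm]
  apply sum_eq_zero
  intro x hx
  have hx0 : x ≠ 0 := (mem_erase.1 hx).1
  simp_rw [chi_add, mul_comm _ x⁻¹]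
  rw [← mul_sum, sum_chi_mul (inv_ne_zero hx0), mul_zero]

lemma kl_sq (a : F) : Kl (a ^ 2) = Kl a := by
  unfold Kl
  rw [sum_erase_zero, sum_erase_zero]
  have hb : Function.Bijective (fun x : F => x ^ 2) :=
    (Finite.injective_iff_bijective).1 fun x y h => CharTwo.sq_injective h
  have := Equiv.sum_comp (Equiv.ofBijective _ hb) (fun x : F => chi (x + a ^ 2 * x⁻¹))
  rw [← this]
  simp only [Equiv.ofBijective_apply]
  congr 1
  · apply sum_congr rfl
    intro x _
    rw [← inv_pow, ← mul_pow, ← CharTwo.add_sq, chi_sq]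
  · simp

/-- Substituting `v = c y` turns `v + 1 / v = c` into the equation `y ^ 2 + y = 1 / c ^ 2`. -/
lemma card_add_inv {c : F} (hc : c ≠ 0) :
    (((univ.erase (0 : F)).filter fun v => v + v⁻¹ = c).card : ℤ) = 1 + chi c⁻¹ := by
  rw [← chi_sq, ← card_as, Nat.cast_inj]
  symm
  refine card_bij' (fun y _ => c * y) (fun v _ => c⁻¹ * v) ?_ ?_ ?_ ?_
  · intro y hy
    simp only [mem_filter, mem_univ, true_and, mem_erase, and_true] at hy ⊢
    have hy0 : y ≠ 0 := by
      rintro rfl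
      simp at hy
      exact hc (pow_eq_zero_iff two_ne_zero |>.1 hy.symm)
    refine ⟨mul_ne_zero hc hy0, ?_⟩
    field_simp at hy ⊢
    linear_combination hy - (c ^ 2 * y - 1) * (CharTwo.two_eq_zero (R := F))
  · intro v hv
    simp only [mem_filter, mem_univ, true_and, mem_erase, and_true] at hv ⊢
    obtain ⟨hv0, hv⟩ := hv
    field_simp at hv ⊢
    linear_combination hv + (v * c - 1) * (CharTwo.two_eq_zero (R := F))
  · intro y hy; field_simp
  · intro y hy; field_simp

lemma sum_add_inv (f : F → ℤ) :
    ∑ v ∈ univ.erase (0 : F), f (v + v⁻¹) =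
      f 0 + ∑ c ∈ univ.erase (0 : F), (1 + chi c⁻¹) * f c := by
  rw [← sum_fiberwise (univ.erase (0 : F)) (fun v => v + v⁻¹), ← add_sum_erase univ _ (mem_univ (0 : F))]
  congr 1
  · have : ((univ.erase (0 : F)).filter fun v => v + v⁻¹ = 0) = {1} := by
      ext v
      simp only [mem_filter, mem_univ, mem_erase, mem_singleton, and_true]
      constructor
      · rintro ⟨h0, h⟩
        rw [CharTwo.add_eq_zero] at h
        have h1 : v ^ 2 = 1 ^ 2 := by field_simp at h; simpa using h
        exact CharTwo.sq_injective h1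
      · rintro rfl
        simp [CharTwo.add_self_eq_zero]
    rw [this, sum_singleton, inv_one, CharTwo.add_self_eq_zero]
  · apply sum_congr rfl
    intro c hc
    rw [← card_add_inv (mem_erase.1 hc).1, ← nsmul_eq_mul, ← sum_const]
    apply sum_congr rfl
    intro v hv
    rw [(mem_filter.1 hv).2]

/-- The twisted sum of Kloosterman sums `∑_{c ≠ 0} χ(1 / c) Kl(1 + c)`. It is the common value linking
the count of quadruples (`sum_main`) with `Kl(w) ^ 2` (`kl_omega_sq`). -/
noncomputable def Jsum (F : Type*) [Field F] [Fintype F] [CharP F 2] [DecidableEq F] : ℤ :=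
  ∑ c ∈ univ.erase (0 : F), chi c⁻¹ * Kl (1 + c)

/-- Since `Kl(w) = Kl(w ^ 2)`, the square is a double sum over `x` and `y = s x`. The product of the
two coefficients occurring is `1 + t + 1 / t` with `t = w s`, because `w ^ 2 + w + 1 = 0`. -/
lemma kl_omega_sq {w : F} (hw : w ^ 2 + w + 1 = 0) : Kl w ^ 2 = Jsum F := by
  have h2 := CharTwo.two_eq_zero (R := F)
  have hw0 : w ≠ 0 := by rintro rfl; simp at hw
  have hw3 : w ^ 3 = 1 := by linear_combination (w - 1) * hw
  have e1 : Kl w ^ 2 = ∑ s ∈ univ.erase (0 : F), Kl (1 + s + s⁻¹) := by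
    rw [← sum_erase_mul _ hw0]
    conv_lhs => rw [sq]; rhs; rw [← kl_sq]
    unfold Kl
    rw [sum_mul_sum]
    have : ∀ x ∈ univ.erase (0 : F), ∑ y ∈ univ.erase (0 : F),
        chi (x + w * x⁻¹) * chi (y + w ^ 2 * y⁻¹) =
        ∑ s ∈ univ.erase (0 : F), chi ((1 + s) * x + (w + w ^ 2 * s⁻¹) * x⁻¹) := by
      intro x hx
      rw [← sum_erase_mul _ (mem_erase.1 hx).1]
      apply sum_congr rfl
      intro s hs
      rw [← chi_add]
      congr 1
      rw [mul_inv]; ring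
    rw [sum_congr rfl this, sum_comm]
    apply sum_congr rfl
    intro s hs
    have hs0 := (mem_erase.1 hs).1
    rw [kl_gen]
    · change _ = Kl _
      congr 1
      field_simp
      linear_combination (s ^ 0 * s * w) * hw  - (w * s * h2) + hw3
    · by_contra! h
      obtain ⟨ha, hb⟩ := h
      have : s = 1 := by rw [CharTwo.add_eq_zero] at ha; exact ha.symm
      subst this
      simp at hb
      have : (1 : F) = 0 := by linear_combination hw - hb
      exact one_ne_zero this
  rw [e1]
  simp_rw [add_assoc]
  rw [sum_add_inv (fun c => Kl (1 + c))]
  simp_rw [add_mul, one_mul]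
  rw [sum_add_distrib, ← add_assoc, add_sum_erase univ (fun c => Kl (1 + c)) (mem_univ 0)]
  have e2 : ∑ c : F, Kl (1 + c) = 0 := by
    rw [← sum_kl (F := F)]
    exact Equiv.sum_comp (Equiv.addLeft (1 : F)) Kl
  rw [e2, zero_add, Jsum]

lemma chi_one {w : F} (hw : w ^ 2 + w + 1 = 0) : chi (1 : F) = 1 :=
  chi_eq_one.2 ⟨w, by linear_combination hw - CharTwo.two_eq_zero (R := F)⟩

/-- Orthogonality of characters: only `x = 1` contributes a full sum over `c`. -/
lemma sum_Bone {w : F} (hw : w ^ 2 + w + 1 = 0) :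
    ∑ c ∈ univ.erase (0 : F), chi c * Kl c = Fintype.card F + 1 := by
  unfold Kl
  simp_rw [mul_sum]
  rw [sum_comm]
  have : ∀ x ∈ univ.erase (0 : F), ∑ c ∈ univ.erase (0 : F), chi c * chi (x + c * x⁻¹) =
      (if x = 1 then (Fintype.card F : ℤ) else 0) - chi x := by
    intro x hx
    have hx0 := (mem_erase.1 hx).1
    have : ∀ c, chi c * chi (x + c * x⁻¹) = chi x * chi ((1 + x⁻¹) * c) := by
      intro c
      rw [← chi_add, ← chi_add]; congr 1; ring
    simp_rw [this]
    rw [← mul_sum]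
    split_ifs with h
    · subst h
      rw [sum_erase_zero]
      simp [CharTwo.add_self_eq_zero, chi_zero, chi_one hw]
    · rw [sum_chi_erase]
      · ring
      · rw [Ne, CharTwo.add_eq_zero]
        intro h'
        exact h (by simpa using h'.symm)
  rw [sum_congr rfl this, sum_sub_distrib]
  have h1 := sum_chi_erase (one_ne_zero (α := F))
  simp only [one_mul] at h1
  rw [h1]
  simp

lemma sum_Btwo : ∑ c ∈ univ.erase (0 : F), chi c⁻¹ * (chi c * Kl c) = Jsum F := by
  unfold Jsum
  rw [← sum_erase_inv (fun c => chi c⁻¹ * Kl (1 + c))]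
  conv_lhs => unfold Kl
  simp_rw [mul_sum]
  rw [sum_comm]
  apply sum_congr rfl
  intro x hx
  rw [← mul_one (1 + x⁻¹), ← kl_gen (Or.inr one_ne_zero), mul_sum]
  apply sum_congr rfl
  intro c hc
  rw [← chi_add, ← chi_add, ← chi_add]
  congr 1
  rw [inv_inv]; ring
end Kl
end Niho

/-! ### Norm one elements of a quadratic extension -/

namespace Niho
open Finset
section Quad
variable {F : Type*} [Field F] [Fintype F] [CharP F 2] [DecidableEq F]
variable {K : Type*} [Field K] [Fintype K] [CharP K 2] [DecidableEq K] [Algebra F K]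

/-- The conjugation `x ↦ x ^ |F|` of `K` over `F`. -/
noncomputable def cj (F K : Type*) [Field F] [Fintype F] [Field K] [Algebra F K] : K →ₐ[F] K :=
  FiniteField.frobeniusAlgHom F K

lemma cj_apply (x : K) : cj F K x = x ^ Fintype.card F := rfl

lemma finrank_two (hK : Fintype.card K = Fintype.card F ^ 2) : Module.finrank F K = 2 := by
  have h := Module.card_eq_pow_finrank (K := F) (V := K)
  rw [hK] at h
  exact (Nat.pow_right_injective (Fintype.one_lt_card (α := F)) h).symm

lemma cj_cj (hK : Fintype.card K = Fintype.card F ^ 2) (x : K) : cj F K (cj F K x) = x := by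
  rw [cj_apply, cj_apply, ← pow_mul, ← sq, ← hK, FiniteField.pow_card]

lemma map_nm (hK : Fintype.card K = Fintype.card F ^ 2) (x : K) :
    algebraMap F K (Algebra.norm F x) = x * cj F K x := by
  rw [FiniteField.algebraMap_norm_eq_prod_pow, finrank_two hK, prod_range_succ, prod_range_one,
    pow_zero, pow_one, pow_one, cj_apply, Nat.card_eq_fintype_card]

lemma map_tr (hK : Fintype.card K = Fintype.card F ^ 2) (x : K) :
    algebraMap F K (Algebra.trace F K x) = x + cj F K x := by
  rw [FiniteField.algebraMap_trace_eq_sum_pow, finrank_two hK, sum_range_succ, sum_range_one,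
    pow_zero, pow_one, pow_one, cj_apply, Nat.card_eq_fintype_card]

lemma cj_fixed (hK : Fintype.card K = Fintype.card F ^ 2) {x : K} (hx : cj F K x = x) :
    ∃ c : F, algebraMap F K c = x := by
  obtain ⟨θ, hθ⟩ := Algebra.trace_surjective F K 1
  refine ⟨Algebra.trace F K (θ * x), ?_⟩
  have h1 := map_tr hK θ
  rw [hθ, map_one] at h1
  rw [map_tr hK, map_mul, hx, ← add_mul, ← h1, one_mul]

lemma inj_alg : Function.Injective (algebraMap F K) := (algebraMap F K).injective

/-- Fix `θ` of trace one. The elements of trace one are `θ + c` with `c ∈ F`, and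
`N(θ + c) = c ^ 2 + c + N(θ)`, where `χ(N(θ)) = -1` because `θ` is not in `F`. -/
lemma card_tr_one (hK : Fintype.card K = Fintype.card F ^ 2) (e : F) :
    ((univ.filter fun v : K => Algebra.trace F K v = 1 ∧ Algebra.norm F v = e).card : ℤ)
      = 1 - chi e := by
  have h2 := CharTwo.two_eq_zero (R := K)
  obtain ⟨θ, hθ⟩ := Algebra.trace_surjective F K 1
  have h1 := map_tr hK θ
  rw [hθ, map_one] at h1
  set ε := Algebra.norm F θ with hε
  have hε' := map_nm hK θ
  rw [← hε] at hε'
  have hθ2 : cj F K θ = θ + 1 := by linear_combination -h1 - θ * h2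
  have hchi : chi ε = -1 := by
    refine (chi_cases ε).resolve_left fun h => ?_
    obtain ⟨c, hc⟩ := chi_eq_one.1 h
    have h3 : (θ + algebraMap F K c) * (θ + algebraMap F K c + 1) = 0 := by
      rw [← hc, hθ2] at hε'
      simp only [map_add, map_pow] at hε'
      linear_combination -hε' + (θ * algebraMap F K c + (algebraMap F K c)^2 + algebraMap F K c) * h2
    have h4 : ∃ d : F, algebraMap F K d = θ := by
      rcases mul_eq_zero.1 h3 with h3 | h3
      · exact ⟨c, (CharTwo.add_eq_zero.1 h3).symm⟩
      · refine ⟨c + 1, ?_⟩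
        rw [map_add, map_one]
        linear_combination h3 - θ * h2
    obtain ⟨d, hd⟩ := h4
    rw [← hd, AlgHom.commutes, CharTwo.add_self_eq_zero] at h1
    exact one_ne_zero h1
  have h5 : 1 - chi e = 1 + chi (e + ε) := by rw [chi_add, hchi]; ring
  rw [h5, ← card_as, Nat.cast_inj]
  symm
  refine card_bij (fun c _ => θ + algebraMap F K c) ?_ ?_ ?_
  · intro c hc
    simp only [mem_filter, mem_univ, true_and] at hc ⊢
    constructor
    · apply inj_alg (F := F) (K := K)
      rw [map_tr hK, map_add, AlgHom.commutes, map_one, hθ2]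
      linear_combination (θ + algebraMap F K c) * h2
    · apply inj_alg (F := F) (K := K)
      rw [map_nm hK, map_add, AlgHom.commutes, hθ2]
      have hc' := congrArg (algebraMap F K) hc
      simp only [map_add, map_pow] at hc'
      rw [hε', hθ2] at hc'
      linear_combination hc' + (θ * algebraMap F K c + θ + θ ^ 2) * h2
  · intro a _ b _ h
    exact inj_alg (add_left_cancel h)
  · intro v hv
    simp only [mem_filter, mem_univ, true_and] at hv
    have hv1 := map_tr hK v
    have hv2 := map_nm hK v
    rw [hv.1, map_one] at hv1
    rw [hv.2] at hv2
    obtain ⟨c, hc⟩ := cj_fixed hK (x := v + θ) (by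
      rw [map_add]; linear_combination -hv1 - h1 - (v + θ - 1) * h2)
    refine ⟨c, ?_, ?_⟩
    · simp only [mem_filter, mem_univ, true_and]
      apply inj_alg (F := F) (K := K)
      simp only [map_add, map_pow]
      rw [hc, hv2, hε', hθ2]
      have : cj F K v = v + 1 := by linear_combination -hv1 - v * h2
      rw [this]
      linear_combination (v * θ) * h2
    · rw [hc]; linear_combination θ * h2

/-- The elements of `K` whose norm to `F` is one (the unit circle `U`). -/
noncomputable def circ (F K : Type*) [Field F] [DecidableEq F] [Field K] [Fintype K]
    [Algebra F K] : Finset K := univ.filter fun u : K => Algebra.norm F u = 1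

lemma mem_circ {u : K} : u ∈ circ F K ↔ Algebra.norm F u = 1 := by simp [circ]

lemma mem_circ' (hK : Fintype.card K = Fintype.card F ^ 2) {u : K} :
    u ∈ circ F K ↔ u * cj F K u = 1 := by
  rw [mem_circ, ← map_nm hK, ← map_one (algebraMap F K), inj_alg.eq_iff]

/-- The number of representations of `p ≠ 0` as an ordered sum of two norm one elements: dividing
by `p` reduces it to the count of elements with trace one and prescribed norm. -/
lemma card_pairs (hK : Fintype.card K = Fintype.card F ^ 2) {p : K} (hp : p ≠ 0) :
    (((circ F K ×ˢ circ F K).filter fun u => u.1 + u.2 = p).card : ℤ)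
      = 1 - chi (Algebra.norm F p⁻¹) := by
  have h2 := CharTwo.two_eq_zero (R := K)
  rw [← card_tr_one hK, Nat.cast_inj]
  have hcp : cj F K p ≠ 0 := by simpa using hp
  refine card_bij' (fun u _ => u.1 * p⁻¹) (fun v _ => (p * v, p * v + p)) ?_ ?_ ?_ ?_
  · rintro ⟨u, v⟩ hu
    simp only [mem_filter, mem_product, mem_univ, true_and] at hu ⊢
    obtain ⟨⟨hu, hv⟩, huv⟩ := hu
    have hu' := hu
    rw [mem_circ] at hu'
    rw [mem_circ' hK] at hu hv
    refine ⟨?_, by rw [map_mul, hu', one_mul]⟩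
    apply inj_alg (F := F) (K := K)
    rw [map_tr hK, map_one, map_mul, map_inv₀]
    have hv' : v = p + u := by linear_combination huv - u * h2
    rw [hv', map_add] at hv
    field_simp
    linear_combination hv - hu - p * cj F K p * h2
  · intro v hv
    simp only [mem_filter, mem_product, mem_univ, true_and] at hv ⊢
    obtain ⟨h1, h3⟩ := hv
    have h1' := map_tr hK v
    rw [h1, map_one] at h1'
    have hc : p * v ∈ circ F K := by
      rw [mem_circ, map_mul, h3, ← map_mul, mul_inv_cancel₀ hp, map_one]
    refine ⟨⟨hc, ?_⟩, by linear_combination p * v * h2⟩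
    rw [mem_circ' hK] at hc ⊢
    simp only [map_add, map_mul] at hc ⊢
    linear_combination hc - p * cj F K p * h1' + p * cj F K p * h2
  · rintro ⟨u, v⟩ hu
    simp only [mem_filter] at hu
    field_simp
    refine Prod.ext rfl ?_
    simp only
    linear_combination -hu.2 + u * h2
  · intro v hv
    field_simp

/-- Two norm one elements whose sum is a nonzero element of `F` are conjugate, so this is a case of
`card_pairs`. -/
lemma card_circ_tr (hK : Fintype.card K = Fintype.card F ^ 2) {s : F} (hs : s ≠ 0) :
    (((circ F K).filter fun u => Algebra.trace F K u = s).card : ℤ) = 1 - chi s⁻¹ := by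
  have h2 := CharTwo.two_eq_zero (R := K)
  have hs' : algebraMap F K s ≠ 0 := by simpa using hs
  have h := card_pairs hK hs'
  rw [← map_inv₀, Algebra.norm_algebraMap, finrank_two hK, chi_sq] at h
  rw [← h, Nat.cast_inj]
  refine card_bij' (fun u _ => (u, cj F K u)) (fun u _ => u.1) ?_ ?_ ?_ ?_
  · intro u hu
    simp only [mem_filter, mem_product] at hu ⊢
    refine ⟨⟨hu.1, ?_⟩, by rw [← map_tr hK, hu.2]⟩
    have := hu.1
    rw [mem_circ' hK] at this ⊢
    rw [cj_cj hK, mul_comm, this]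
  · rintro ⟨u, v⟩ hu
    simp only [mem_filter, mem_product] at hu ⊢
    obtain ⟨⟨hu, hv⟩, huv⟩ := hu
    refine ⟨hu, ?_⟩
    rw [mem_circ' hK] at hu hv
    apply inj_alg (F := F) (K := K)
    rw [map_tr hK, ← huv]
    have e : cj F K u + cj F K v = u + v := by rw [← map_add, huv, AlgHom.commutes]
    have h3 : (u + v) * (u * v - 1) = 0 := by
      linear_combination u * v * e - v * hu - u * hv + (u * v ^ 2 + u ^ 2 * v - u - v) * h2
    rw [huv, mul_eq_zero, or_iff_right hs'] at h3
    have hu0 : u ≠ 0 := by rintro rfl; simp at hu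
    have : cj F K u = v := mul_left_cancel₀ hu0 (by linear_combination hu - h3)
    rw [this]
  · intro u hu; rfl
  · rintro ⟨u, v⟩ hu
    simp only [mem_filter, mem_product] at hu
    obtain ⟨⟨hu, hv⟩, huv⟩ := hu
    rw [mem_circ' hK] at hu hv
    have e : cj F K u + cj F K v = u + v := by rw [← map_add, huv, AlgHom.commutes]
    have h3 : (u + v) * (u * v - 1) = 0 := by
      linear_combination u * v * e - v * hu - u * hv + (u * v ^ 2 + u ^ 2 * v - u - v) * h2
    rw [huv, mul_eq_zero, or_iff_right hs'] at h3
    have hu0 : u ≠ 0 := by rintro rfl; simp at hu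
    have : cj F K u = v := mul_left_cancel₀ hu0 (by linear_combination hu - h3)
    simp [this]

lemma circ_tr_zero (hK : Fintype.card K = Fintype.card F ^ 2) {u : K} (hu : u ∈ circ F K)
    (h : Algebra.trace F K u = 0) : u = 1 := by
  have h1 := map_tr hK u
  rw [h, map_zero, eq_comm, CharTwo.add_eq_zero] at h1
  rw [mem_circ' hK, ← h1] at hu
  exact CharTwo.sq_injective (show u ^ 2 = 1 ^ 2 by rw [sq, hu, one_pow])

lemma one_mem_circ : (1 : K) ∈ circ F K := by rw [mem_circ, map_one]

lemma tr_one (hK : Fintype.card K = Fintype.card F ^ 2) : Algebra.trace F K 1 = 0 := by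
  apply inj_alg (F := F) (K := K)
  rw [map_tr hK, map_one, map_zero, CharTwo.add_self_eq_zero]

lemma sum_circ (hK : Fintype.card K = Fintype.card F ^ 2) (f : F → ℤ) :
    ∑ u ∈ circ F K, f (Algebra.trace F K u) =
      f 0 + ∑ s ∈ univ.erase (0 : F), (1 - chi s⁻¹) * f s := by
  rw [← sum_fiberwise (circ F K) (fun u => Algebra.trace F K u),
    ← add_sum_erase univ _ (mem_univ (0 : F))]
  congr 1
  · have : ((circ F K).filter fun u => Algebra.trace F K u = 0) = {1} := by
      ext u
      simp only [mem_filter, mem_singleton]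
      constructor
      · rintro ⟨h1, h3⟩; exact circ_tr_zero hK h1 h3
      · rintro rfl; exact ⟨one_mem_circ, tr_one hK⟩
    rw [this, sum_singleton, tr_one hK]
  · apply sum_congr rfl
    intro c hc
    rw [← card_circ_tr hK (mem_erase.1 hc).1, ← nsmul_eq_mul, ← sum_const]
    apply sum_congr rfl
    intro v hv
    rw [(mem_filter.1 hv).2]

lemma card_circ (hK : Fintype.card K = Fintype.card F ^ 2) :
    ((circ F K).card : ℤ) = Fintype.card F + 1 := by
  have h := sum_circ hK (fun _ : F => (1 : ℤ))
  have h1 := sum_chi_erase (one_ne_zero (α := F))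
  rw [← sum_erase_inv] at h1
  simp only [one_mul] at h1
  simp only [sum_const, mul_one, sum_sub_distrib, h1, nsmul_eq_mul] at h
  rw [h, card_erase_of_mem (mem_univ _), card_univ, Nat.cast_sub Fintype.card_pos]
  push_cast; ring

/-- The Kloosterman sum, up to sign, as a character sum over the norm one elements. -/
lemma sum_circ_chi (hK : Fintype.card K = Fintype.card F ^ 2) {c : F} (hc : c ≠ 0) :
    ∑ u ∈ circ F K, chi (c * Algebra.trace F K u) = - Kl c := by
  rw [sum_circ hK (fun s => chi (c * s))]
  simp_rw [sub_mul, one_mul]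
  rw [sum_sub_distrib, sum_chi_erase hc, mul_zero, chi_zero]
  simp_rw [← chi_add]
  have := kl_gen (F := F) (a := c) (b := 1) (Or.inl hc)
  rw [mul_one] at this
  rw [← this]
  simp_rw [one_mul, add_comm]
  ring

/-- Polar decomposition: each nonzero element of `K` is uniquely a nonzero element of `F` times
an element of norm one. -/
lemma sum_polar (hK : Fintype.card K = Fintype.card F ^ 2) (f : K → ℤ) :
    ∑ y ∈ univ.erase (0 : K), f y =
      ∑ v ∈ univ.erase (0 : F), ∑ u ∈ circ F K, f (algebraMap F K v * u) := by
  rw [← sum_product']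
  symm
  refine sum_bij (fun z _ => algebraMap F K z.1 * z.2) ?_ ?_ ?_ ?_
  · rintro ⟨v, u⟩ h
    simp only [mem_product, mem_erase, mem_univ, and_true] at h ⊢
    refine mul_ne_zero (by simpa using h.1) ?_
    rintro rfl
    have := h.2
    rw [mem_circ' hK] at this
    simp at this
  · rintro ⟨v, u⟩ h ⟨v', u'⟩ h' he
    simp only [mem_product, mem_erase, mem_univ, and_true, mem_circ] at h h' he
    have h3 := congrArg (Algebra.norm F) he
    rw [map_mul, map_mul, h.2, h'.2, Algebra.norm_algebraMap, Algebra.norm_algebraMap,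
      finrank_two hK, mul_one, mul_one] at h3
    have h4 : v = v' := CharTwo.sq_injective h3
    subst h4
    rw [Prod.mk.injEq]
    exact ⟨rfl, mul_left_cancel₀ (by simpa using h.1) he⟩
  · intro y hy
    have hy0 := (mem_erase.1 hy).1
    have hb : Function.Bijective (fun x : F => x ^ 2) :=
      (Finite.injective_iff_bijective).1 fun x y h => CharTwo.sq_injective h
    obtain ⟨v, hv⟩ := hb.2 (Algebra.norm F y)
    simp only at hv
    have hv0 : v ≠ 0 := by
      rintro rfl
      rw [eq_comm] at hv
      simp at hv
      exact hy0 hv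
    have hv0' : algebraMap F K v ≠ 0 := by simpa using hv0
    refine ⟨(v, (algebraMap F K v)⁻¹ * y), ?_, by simp only; field_simp⟩
    simp only [mem_product, mem_erase, mem_univ, and_true, mem_circ]
    refine ⟨hv0, ?_⟩
    rw [map_mul, ← hv, ← map_inv₀, Algebra.norm_algebraMap, finrank_two hK, ← mul_pow,
      inv_mul_cancel₀ hv0, one_pow]
  · intros; rfl
end Quad
end Niho

/-! ### Quadruples of norm one elements with sum one -/

namespace Niho
open Finset
section Quads
variable {F : Type*} [Field F] [Fintype F] [CharP F 2] [DecidableEq F]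
variable {K : Type*} [Field K] [Fintype K] [CharP K 2] [DecidableEq K] [Algebra F K]

/-- The ordered quadruples of norm one elements with sum `1`, grouped in two pairs. -/
noncomputable def quads (F K : Type*) [Field F] [DecidableEq F] [Field K] [Fintype K]
    [DecidableEq K] [Algebra F K] : Finset ((K × K) × (K × K)) :=
  ((circ F K ×ˢ circ F K) ×ˢ (circ F K ×ˢ circ F K)).filter
    fun u => u.1.1 + u.1.2 + (u.2.1 + u.2.2) = 1

lemma card_quads_eq_sum : (quads F K).card =
    ∑ p : K, ((circ F K ×ˢ circ F K).filter fun u => u.1 + u.2 = p).card *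
      ((circ F K ×ˢ circ F K).filter fun u => u.1 + u.2 = 1 + p).card := by
  rw [card_eq_sum_card_fiberwise (f := fun u => u.1.1 + u.1.2) (t := univ) (by simp)]
  apply sum_congr rfl
  intro p _
  rw [← card_product]
  congr 1
  ext ⟨⟨a, b⟩, ⟨c, d⟩⟩
  have h2 := CharTwo.two_eq_zero (R := K)
  simp only [quads, mem_filter, mem_product]
  constructor
  · rintro ⟨⟨⟨⟨ha, hb⟩, hc, hd⟩, h⟩, hp⟩
    refine ⟨⟨⟨ha, hb⟩, hp⟩, ⟨hc, hd⟩, ?_⟩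
    linear_combination h + hp - (a + b) * h2
  · rintro ⟨⟨⟨ha, hb⟩, hp⟩, ⟨hc, hd⟩, h⟩
    refine ⟨⟨⟨⟨ha, hb⟩, hc, hd⟩, ?_⟩, hp⟩
    linear_combination h + hp + p * h2

lemma sum_chi_norm (hK : Fintype.card K = Fintype.card F ^ 2) :
    ∑ y ∈ univ.erase (0 : K), chi (Algebra.norm F y) = -(Fintype.card F + 1) := by
  rw [sum_polar hK (fun y => chi (Algebra.norm F y))]
  have h1 := sum_chi_erase (one_ne_zero (α := F))
  simp only [one_mul] at h1
  have : ∀ v ∈ univ.erase (0 : F), ∑ u ∈ circ F K, chi (Algebra.norm F (algebraMap F K v * u)) =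
      (Fintype.card F + 1) * chi v := by
    intro v _
    rw [← card_circ hK (K := K), ← nsmul_eq_mul, ← sum_const]
    apply sum_congr rfl
    intro u hu
    rw [map_mul, mem_circ.1 hu, mul_one, Algebra.norm_algebraMap, finrank_two hK, chi_sq]
  rw [sum_congr rfl this, ← mul_sum, h1]
  ring

lemma norm_add_one (hK : Fintype.card K = Fintype.card F ^ 2) (x : K) :
    Algebra.norm F (x + 1) = Algebra.norm F x + Algebra.trace F K x + 1 := by
  apply inj_alg (F := F) (K := K)
  simp only [map_add, map_nm hK, map_tr hK, map_one]
  ring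

lemma sum_chi_norm_add_one (hK : Fintype.card K = Fintype.card F ^ 2)
    {w : F} (hw : w ^ 2 + w + 1 = 0) :
    ∑ y ∈ univ.erase (0 : K), chi (Algebra.norm F (y + 1)) = -(Fintype.card F + 1) := by
  have hfr : Module.finrank F K ≠ 0 := by rw [finrank_two hK]; norm_num
  have h0 : Algebra.norm F (0 : K) = 0 := by
    apply inj_alg (F := F) (K := K); rw [map_nm hK]; simp
  rw [← sum_chi_norm hK, sum_erase_zero, sum_erase_zero, zero_add, map_one, chi_one hw, h0, chi_zero]
  congr 1
  exact Equiv.sum_comp (Equiv.addRight (1 : K)) (fun y => chi (Algebra.norm F y))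

/-- In polar coordinates `y = v u` the summand is `χ(c) χ(c Tr(u))` with `c = v + 1 / v`, and the sum
over `u` is `-Kl(c)`. -/
lemma sum_main (hK : Fintype.card K = Fintype.card F ^ 2)
    {w : F} (hw : w ^ 2 + w + 1 = 0) :
    ∑ y ∈ univ.erase (0 : K), chi (Algebra.norm F (y + 1)) * chi (Algebra.norm F (y⁻¹ + 1))
      = - Jsum F := by
  have h2 := CharTwo.two_eq_zero (R := F)
  rw [sum_polar hK (fun y => chi (Algebra.norm F (y + 1)) * chi (Algebra.norm F (y⁻¹ + 1)))]
  have : ∀ v ∈ univ.erase (0 : F), ∑ u ∈ circ F K,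
      chi (Algebra.norm F (algebraMap F K v * u + 1)) *
        chi (Algebra.norm F ((algebraMap F K v * u)⁻¹ + 1)) =
      chi (v + v⁻¹) * ∑ u ∈ circ F K, chi ((v + v⁻¹) * Algebra.trace F K u) := by
    intro v hv
    have hv0 := (mem_erase.1 hv).1
    have hv0' : algebraMap F K v ≠ 0 := by simpa using hv0
    rw [mul_sum]
    apply sum_congr rfl
    intro u hu
    have hu' := hu
    rw [mem_circ' hK] at hu'
    have hu0 : u ≠ 0 := by rintro rfl; simp at hu'
    have e1 : Algebra.trace F K (algebraMap F K v * u) = v * Algebra.trace F K u := by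
      rw [← Algebra.smul_def, map_smul, smul_eq_mul]
    have e2 : Algebra.trace F K (algebraMap F K v * u)⁻¹ = v⁻¹ * Algebra.trace F K u := by
      rw [mul_inv, ← map_inv₀, ← Algebra.smul_def, map_smul, smul_eq_mul]
      congr 1
      apply inj_alg (F := F) (K := K)
      rw [map_tr hK, map_tr hK, map_inv₀, ← eq_inv_of_mul_eq_one_right hu', eq_comm]
      rw [inv_eq_of_mul_eq_one_left hu']
      ring
    have e3 : Algebra.norm F (algebraMap F K v * u)⁻¹ = (Algebra.norm F (algebraMap F K v * u))⁻¹ := by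
      apply eq_inv_of_mul_eq_one_left
      rw [← map_mul, inv_mul_cancel₀ (mul_ne_zero hv0' hu0), map_one]
    rw [norm_add_one hK, norm_add_one hK, e1, e2, e3, map_mul, mem_circ.1 hu,
      Algebra.norm_algebraMap, finrank_two hK, mul_one, ← chi_sq (v + v⁻¹), ← chi_add, ← chi_add]
    congr 1
    linear_combination (1 - v * v⁻¹) * h2
  rw [sum_congr rfl this]
  rw [sum_add_inv (fun c => chi c * ∑ u ∈ circ F K, chi (c * Algebra.trace F K u))]
  have h3 : ∀ c ∈ univ.erase (0 : F), (1 + chi c⁻¹) *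
      (chi c * ∑ u ∈ circ F K, chi (c * Algebra.trace F K u)) =
      - (chi c * Kl c) - chi c⁻¹ * (chi c * Kl c) := by
    intro c hc
    rw [sum_circ_chi hK (mem_erase.1 hc).1]
    ring
  rw [sum_congr rfl h3, sum_sub_distrib, sum_neg_distrib, sum_Bone hw, sum_Btwo]
  simp only [zero_mul, chi_zero, sum_const, nsmul_eq_mul, card_circ hK]
  ring

/-- Splitting a quadruple in two pairs with sums `p` and `1 + p` expresses the count by
`card_pairs` as a sum over `p` of products of characters of norms. -/
theorem card_quads (hK : Fintype.card K = Fintype.card F ^ 2)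
    {w : F} (hw : w ^ 2 + w + 1 = 0) :
    ((quads F K).card : ℤ) = ((Fintype.card F : ℤ) + 1) ^ 2 - Kl w ^ 2 := by
  have h2 := CharTwo.two_eq_zero (R := K)
  have h0 : Algebra.norm F (0 : K) = 0 := by
    apply inj_alg (F := F) (K := K); rw [map_nm hK]; simp
  rw [kl_omega_sq hw, card_quads_eq_sum]
  push_cast
  have s1 : ∀ p : K, (((circ F K ×ˢ circ F K).filter fun u => u.1 + u.2 = p).card : ℤ) *
      ((circ F K ×ˢ circ F K).filter fun u => u.1 + u.2 = 1 + p).card =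
      (1 - chi (Algebra.norm F p⁻¹)) * (1 - chi (Algebra.norm F (1 + p)⁻¹)) := by
    intro p
    have h1 : (((circ F K ×ˢ circ F K).filter fun u => u.1 + u.2 = (1 : K)).card : ℤ) = 0 := by
      rw [card_pairs hK one_ne_zero, inv_one, map_one, chi_one hw, sub_self]
    by_cases hp : p = 0
    · subst hp
      rw [add_zero, h1, inv_zero, h0, chi_zero]; simp
    · by_cases hp1 : p = 1
      · subst hp1
        rw [h1, inv_one, map_one, chi_one hw]; simp
      · rw [card_pairs hK hp, card_pairs hK]
        rw [Ne, CharTwo.add_eq_zero]; exact fun h => hp1 h.symm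
  simp_rw [s1]
  -- the substitution `p = 1 / (y + 1)` makes the two factors symmetric under `y ↦ 1 / y`
  have s2 := Equiv.sum_comp ((Equiv.addRight (1 : K)).trans (Equiv.inv K))
    (fun p : K => (1 - chi (Algebra.norm F p⁻¹)) * (1 - chi (Algebra.norm F (1 + p)⁻¹)))
  rw [← s2]
  simp only [Equiv.trans_apply, Equiv.coe_addRight, Equiv.inv_apply, inv_inv]
  have s3 : ∀ y ∈ univ.erase (0 : K), (1 - chi (Algebra.norm F (y + 1))) *
      (1 - chi (Algebra.norm F (1 + (y + 1)⁻¹)⁻¹)) =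
      1 - chi (Algebra.norm F (y + 1)) - chi (Algebra.norm F (y⁻¹ + 1)) +
      chi (Algebra.norm F (y + 1)) * chi (Algebra.norm F (y⁻¹ + 1)) := by
    intro y hy
    have hy0 := (mem_erase.1 hy).1
    by_cases hy1 : y + 1 = 0
    · have : y = 1 := CharTwo.add_eq_zero.1 hy1
      subst this
      rw [hy1, h0, chi_zero, inv_one, hy1, h0, chi_zero]; simp
    · have : (1 + (y + 1)⁻¹)⁻¹ = y⁻¹ + 1 := by
        have : 1 + (y + 1)⁻¹ = y * (y + 1)⁻¹ := by
          field_simp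
          linear_combination h2
        rw [this, mul_inv, inv_inv]
        field_simp
        ring
      rw [this]
      ring
  rw [← add_sum_erase univ _ (mem_univ (0 : K)), sum_congr rfl s3]
  have s4 : ∑ y ∈ univ.erase (0 : K), chi (Algebra.norm F (y⁻¹ + 1)) = -(Fintype.card F + 1) := by
    rw [sum_erase_inv (fun y => chi (Algebra.norm F (y + 1))), sum_chi_norm_add_one hK hw]
  rw [sum_add_distrib, sum_sub_distrib, sum_sub_distrib, sum_main hK hw, s4,
    sum_chi_norm_add_one hK hw, zero_add, map_one, chi_one hw, sum_const,
    card_erase_of_mem (mem_univ _), card_univ, hK, nsmul_eq_mul, Nat.cast_sub (Nat.one_le_pow _ _ Fintype.card_pos)]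
  push_cast
  ring
end Quads
end Niho

/-! ### The derivative in terms of norm one elements -/

namespace Niho
open Finset
section Fib
variable {F : Type*} [Field F] [Fintype F] [CharP F 2] [DecidableEq F]
variable {K : Type*} [Field K] [Fintype K] [CharP K 2] [DecidableEq K] [Algebra F K]

lemma circ_ne_zero (hK : Fintype.card K = Fintype.card F ^ 2) {u : K} (hu : u ∈ circ F K) :
    u ≠ 0 := by
  rw [mem_circ' hK] at hu
  rintro rfl; simp at hu

lemma circ_cj (hK : Fintype.card K = Fintype.card F ^ 2) {u : K} (hu : u ∈ circ F K) :
    cj F K u = u⁻¹ := by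
  rw [mem_circ' hK] at hu
  exact eq_inv_of_mul_eq_one_right hu

lemma circ_mul {u v : K} (hu : u ∈ circ F K) (hv : v ∈ circ F K) : u * v ∈ circ F K := by
  rw [mem_circ] at *; rw [map_mul, hu, hv, one_mul]

lemma circ_inv (hK : Fintype.card K = Fintype.card F ^ 2) {u : K} (hu : u ∈ circ F K) :
    u⁻¹ ∈ circ F K := by
  rw [← circ_cj hK hu]
  rw [mem_circ' hK] at *
  rw [cj_cj hK, mul_comm, hu]

/-- No three norm one elements add up to zero. Combining such a relation with its conjugate shows that
the quotient of two of them is a root of `X ^ 2 + X + 1`. This root lies in `F`, and the only norm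
one element of `F` is `1`, which is not a root. -/
lemma no_cube (hK : Fintype.card K = Fintype.card F ^ 2) {w : F} (hw : w ^ 2 + w + 1 = 0)
    {u v t : K} (hu : u ∈ circ F K) (hv : v ∈ circ F K) (ht : t ∈ circ F K) :
    u + v + t ≠ 0 := by
  intro h
  have h2 := CharTwo.two_eq_zero (R := K)
  have hu0 := circ_ne_zero hK hu
  have hv0 := circ_ne_zero hK hv
  have ht0 := circ_ne_zero hK ht
  have hc := congrArg (cj F K) h
  simp only [map_add, map_zero, circ_cj hK hu, circ_cj hK hv, circ_cj hK ht] at hc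
  field_simp at hc
  have h3 : u ^ 2 + u * v + v ^ 2 = 0 := by
    linear_combination (u + v) * h - hc
  have hr : u * v⁻¹ ∈ circ F K := circ_mul hu (circ_inv hK hv)
  set r := u * v⁻¹ with hr'
  have h4 : r ^ 2 + r + 1 = 0 := by
    rw [hr']; field_simp; linear_combination h3
  have hw' := congrArg (algebraMap F K) hw
  simp only [map_add, map_pow, map_one, map_zero] at hw'
  have h5 : (r + algebraMap F K w) * (r + algebraMap F K (w + 1)) = 0 := by
    rw [map_add, map_one]
    linear_combination h4 + hw' + (r * algebraMap F K w - 1) * h2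
  have h6 : ∃ d : F, algebraMap F K d = r := by
    rcases mul_eq_zero.1 h5 with h5 | h5
    · exact ⟨w, (CharTwo.add_eq_zero.1 h5).symm⟩
    · exact ⟨w + 1, (CharTwo.add_eq_zero.1 h5).symm⟩
  obtain ⟨d, hd⟩ := h6
  rw [mem_circ' hK, ← hd, AlgHom.commutes, hd] at hr
  have h7 : r = 1 := CharTwo.sq_injective (show r ^ 2 = 1 ^ 2 by rw [sq, hr, one_pow])
  rw [h7] at h4
  have : (1 : K) = 0 := by linear_combination h4 - h2
  exact one_ne_zero this

/-- The value of `D(x) - 1` for `x` outside the subfield, as a function of `a = x̄ / x` and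
`b = (x̄ + 1) / (x + 1)`. -/
def gg (a b : K) : K := (1 + a) * (1 + b) * (1 + a + b)

lemma gg_comm (a b : K) : gg a b = gg b a := by unfold gg; ring

/-- If two pairs with the same value of `gg` share an element other than `1`, their remaining elements
agree. -/
lemma gg_left (hK : Fintype.card K = Fintype.card F ^ 2) {w : F} (hw : w ^ 2 + w + 1 = 0)
    {a b d : K} (ha : a ∈ circ F K) (hb : b ∈ circ F K) (hd : d ∈ circ F K) (ha1 : a ≠ 1)
    (h : gg a b = gg a d) : b = d := by
  have h2 := CharTwo.two_eq_zero (R := K)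
  unfold gg at h
  have h1 : (1 + a) * ((b + d) * (a + b + d)) = 0 := by
    linear_combination h + (1 + a) * (b * d + d ^ 2 + d * a + d - b) * h2
  rcases mul_eq_zero.1 h1 with h1 | h1
  · exact absurd (CharTwo.add_eq_zero.1 h1).symm ha1
  · rcases mul_eq_zero.1 h1 with h1 | h1
    · exact CharTwo.add_eq_zero.1 h1
    · exact absurd h1 (no_cube hK hw ha hb hd)

/-- If two pairs of norm one elements other than `1` have the same value of `gg` and do not coincide
up to order, then the sum of the four elements has norm one. -/
lemma gg_sum (hK : Fintype.card K = Fintype.card F ^ 2) {w : F} (hw : w ^ 2 + w + 1 = 0)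
    {a b c d : K} (ha : a ∈ circ F K) (hb : b ∈ circ F K) (hc : c ∈ circ F K) (hd : d ∈ circ F K)
    (ha1 : a ≠ 1) (hb1 : b ≠ 1) (h : gg a b = gg c d)
    (hn1 : ¬ (a = c ∧ b = d)) (hn2 : ¬ (a = d ∧ b = c)) : a + b + (c + d) ∈ circ F K := by
  have h2 := CharTwo.two_eq_zero (R := K)
  have ha0 := circ_ne_zero hK ha
  have hb0 := circ_ne_zero hK hb
  have hc0 := circ_ne_zero hK hc
  have hd0 := circ_ne_zero hK hd
  have hac : a ≠ c := by
    rintro rfl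
    exact hn1 ⟨rfl, gg_left hK hw ha hb hd ha1 h⟩
  have had : a ≠ d := by
    rintro rfl
    rw [gg_comm c a] at h
    exact hn2 ⟨rfl, gg_left hK hw ha hb hc ha1 h⟩
  have hbc : b ≠ c := by
    rintro rfl
    rw [gg_comm a b] at h
    exact hn2 ⟨gg_left hK hw hb ha hd hb1 h, rfl⟩
  have hbd : b ≠ d := by
    rintro rfl
    rw [gg_comm a b, gg_comm c b] at h
    exact hn1 ⟨gg_left hK hw hb ha hc hb1 h, rfl⟩
  have hh := congrArg (cj F K) h
  unfold gg at h hh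
  simp only [map_add, map_mul, map_one, circ_cj hK ha, circ_cj hK hb, circ_cj hK hc,
    circ_cj hK hd] at hh
  field_simp at hh
  -- With `Q` the product of the four elements, the conjugates of `X` and `Z` are `Y / Q` and `Z / Q`.
  -- `E1` is the hypothesis and `E2` its conjugate; eliminating gives `(X + Z) (X Y + Q) = 0`, where
  -- `X Y = Q` says that `X` has norm one.
  obtain ⟨X, hX⟩ : ∃ X, X = a + b + (c + d) := ⟨_, rfl⟩
  obtain ⟨Z, hZ⟩ : ∃ Z, Z = a * b + c * d := ⟨_, rfl⟩
  obtain ⟨Y, hY⟩ : ∃ Y, Y = (a + b) * (c * d) + (c + d) * (a * b) := ⟨_, rfl⟩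
  obtain ⟨Q, hQ⟩ : ∃ Q, Q = a * b * (c * d) := ⟨_, rfl⟩
  have E1 : X ^ 2 + Z + X * Z + Y = 0 := by
    subst hX hZ hY
    grind
  have E2 : Y * (Y + Z) + Q * (X + Z) = 0 := by
    subst hX hZ hY hQ
    linear_combination hh + (a * b * c * d ^ 2 + a * b * c ^ 2 * d + a * b ^ 2 * c * d
      + a * b ^ 2 * c * d ^ 2 + a * b ^ 2 * c ^ 2 * d - a * b ^ 2 * c ^ 2 * d ^ 2
      + a ^ 2 * b * c * d + a ^ 2 * b * c * d ^ 2 + a ^ 2 * b * c ^ 2 * d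
      - a ^ 2 * b * c ^ 2 * d ^ 2 + a ^ 2 * b ^ 2 * c + 3 * a ^ 2 * b ^ 2 * c * d
      + a ^ 2 * b ^ 2 * c * d ^ 2 + a ^ 2 * b ^ 2 * c ^ 2 + a ^ 2 * b ^ 2 * c ^ 2 * d
      + a ^ 2 * b ^ 2 * d + a ^ 2 * b ^ 2 * d ^ 2) * h2
  have E3 : (X + Z) * (X * Y + Q) = 0 := by grind
  have E4 : X * Y + Q = 0 := by
    refine (mul_eq_zero.1 E3).resolve_left fun h0 => ?_
    -- `X = Z` would make the resultant of the two pairs vanish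
    have hD : (a + c) * (a + d) * ((b + c) * (b + d)) = 0 := by
      have : Z ^ 2 + X * Y = 0 := by grind
      rw [← this]
      subst hX hZ hY
      grind
    simp only [mul_eq_zero, CharTwo.add_eq_zero] at hD
    tauto
  rw [mem_circ' hK]
  simp only [map_add, circ_cj hK ha, circ_cj hK hb, circ_cj hK hc, circ_cj hK hd]
  subst hX hY hQ
  field_simp
  linear_combination E4 - (a * b * c * d) * h2

lemma pow_eq (x : K) (hx : x ≠ 0) :
    x ^ (3 * Fintype.card F - 2) = cj F K x ^ 3 / x ^ 2 := by
  have h1 : 1 ≤ Fintype.card F := Fintype.card_pos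
  rw [eq_div_iff (pow_ne_zero 2 hx), ← pow_add, cj_apply, ← pow_mul]
  congr 1
  omega

/-- The derivative `D(x) = (x + 1) ^ (3q - 2) + x ^ (3q - 2)`, where `q = |F|`. -/
def dF (F : Type*) [Fintype F] {K : Type*} [Field K] (x : K) : K :=
  (x + 1) ^ (3 * Fintype.card F - 2) + x ^ (3 * Fintype.card F - 2)

lemma dF_add_one (x : K) : dF F (x + 1) = dF F x := by
  unfold dF
  rw [add_assoc, CharTwo.add_self_eq_zero, add_zero, add_comm]

lemma pow_fixed {x : K} (hx : cj F K x = x) :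
    x ^ (3 * Fintype.card F - 2) = x := by
  by_cases h0 : x = 0
  · subst h0
    have h1 : 1 ≤ Fintype.card F := Fintype.card_pos
    rw [zero_pow]; omega
  · rw [pow_eq x h0, hx]; field_simp

lemma dF_fixed {x : K} (hx : cj F K x = x) :
    dF F x = 1 := by
  unfold dF
  rw [pow_fixed hx, pow_fixed (by rw [map_add, hx, map_one])]
  linear_combination x * CharTwo.two_eq_zero (R := K)

/-- The quotient `x̄ / x`, a norm one element when `x ≠ 0`. -/
noncomputable def ph (F : Type*) {K : Type*} [Field F] [Fintype F] [Field K] [Algebra F K]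
    (x : K) : K := cj F K x / x

lemma nf_ne_zero {x : K} (hx : cj F K x ≠ x) : x ≠ 0 := by rintro rfl; simp at hx

lemma nf_add_one {x : K} (hx : cj F K x ≠ x) : cj F K (x + 1) ≠ x + 1 := by
  simpa using hx

lemma ph_mem (hK : Fintype.card K = Fintype.card F ^ 2) {x : K} (hx : cj F K x ≠ x) :
    ph F x ∈ circ F K := by
  have h0 := nf_ne_zero hx
  have h0' : cj F K x ≠ 0 := by simpa using h0
  rw [mem_circ' hK, ph, map_div₀, cj_cj hK]
  field_simp

lemma ph_ne_one {x : K} (hx : cj F K x ≠ x) : ph F x ≠ 1 := by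
  have h0 := nf_ne_zero hx
  rw [ph, Ne, div_eq_one_iff_eq h0]; exact hx

lemma ph_ne {x : K} (hx : cj F K x ≠ x) : ph F x ≠ ph F (x + 1) := by
  have h0 := nf_ne_zero hx
  have h1 := nf_ne_zero (nf_add_one hx)
  rw [ph, ph, Ne, div_eq_div_iff h0 h1, map_add, map_one]
  intro h
  apply hx
  linear_combination h

lemma ph_recover {x : K} (hx : cj F K x ≠ x) :
    (1 + ph F (x + 1)) / (ph F x + ph F (x + 1)) = x := by
  have h0 := nf_ne_zero hx
  have h1 := nf_ne_zero (nf_add_one hx)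
  have h2 := CharTwo.two_eq_zero (R := K)
  have h3 : ph F x + ph F (x + 1) ≠ 0 := by
    rw [Ne, CharTwo.add_eq_zero]; exact ph_ne hx
  rw [div_eq_iff h3]
  rw [ph, ph, map_add, map_one]
  field_simp
  linear_combination (1 - x * cj F K x) * h2

lemma dF_nf {x : K} (hx : cj F K x ≠ x) :
    dF F x = 1 + gg (ph F x) (ph F (x + 1)) := by
  have h0 := nf_ne_zero hx
  have h1 := nf_ne_zero (nf_add_one hx)
  have h2 := CharTwo.two_eq_zero (R := K)
  unfold dF gg
  rw [pow_eq x h0, pow_eq _ h1, ph, ph, map_add, map_one]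
  field_simp
  grind

/-- Together with `ph_ext`: points outside the subfield correspond to pairs
of distinct elements of `U` other than `1`. -/
lemma ph_surj (hK : Fintype.card K = Fintype.card F ^ 2) {a b : K} (ha : a ∈ circ F K)
    (hb : b ∈ circ F K) (ha1 : a ≠ 1) (hb1 : b ≠ 1) (hab : a ≠ b) :
    ∃ x : K, cj F K x ≠ x ∧ ph F x = a ∧ ph F (x + 1) = b := by
  have h2 := CharTwo.two_eq_zero (R := K)
  have ha0 := circ_ne_zero hK ha
  have hb0 := circ_ne_zero hK hb
  have hs : a + b ≠ 0 := by rwa [Ne, CharTwo.add_eq_zero]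
  have h1a : 1 + a ≠ 0 := by rw [Ne, CharTwo.add_eq_zero]; exact ha1.symm
  have h1b : 1 + b ≠ 0 := by rw [Ne, CharTwo.add_eq_zero]; exact hb1.symm
  have hc : cj F K ((1 + b) / (a + b)) = (1 + b) / (a + b) * a := by
    simp only [map_div₀, map_add, map_one, circ_cj hK ha, circ_cj hK hb]
    have e1 : a⁻¹ + b⁻¹ = (a + b) / (a * b) := by field_simp; ring
    have e2 : 1 + b⁻¹ = (1 + b) / b := by field_simp; ring
    rw [e1, e2]
    field_simp
  have hx0 : (1 + b) / (a + b) ≠ 0 := div_ne_zero h1b hs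
  have hx1 : (1 + b) / (a + b) + 1 = (1 + a) / (a + b) := by
    field_simp
    linear_combination b * h2
  refine ⟨(1 + b) / (a + b), ?_, ?_, ?_⟩
  · rw [hc]
    intro h
    exact ha1 (mul_left_cancel₀ hx0 (by rw [h, mul_one]))
  · rw [ph, hc, mul_div_cancel_left₀ _ hx0]
  · rw [ph, map_add, map_one, hc, hx1]
    field_simp
    linear_combination a * h2

lemma dF_eq_one_iff (hK : Fintype.card K = Fintype.card F ^ 2) {w : F} (hw : w ^ 2 + w + 1 = 0)
    {x : K} : dF F x = 1 ↔ cj F K x = x := by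
  refine ⟨fun h => ?_, dF_fixed⟩
  by_contra hx
  have h0 : gg (ph F x) (ph F (x + 1)) = 0 := by
    rw [dF_nf hx] at h
    linear_combination h
  unfold gg at h0
  have h3 := no_cube hK hw (one_mem_circ (F := F) (K := K)) (ph_mem hK hx) (ph_mem hK (nf_add_one hx))
  have h4 := ph_ne_one hx
  have h5 := ph_ne_one (nf_add_one hx)
  simp only [mul_eq_zero, CharTwo.add_eq_zero (a := (1 : K)), h3, or_false] at h0
  rcases h0 with h0 | h0
  · exact h4 h0.symm
  · exact h5 h0.symm

lemma ph_ext {x y : K} (hx : cj F K x ≠ x) (hy : cj F K y ≠ y)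
    (h1 : ph F x = ph F y) (h2 : ph F (x + 1) = ph F (y + 1)) : x = y := by
  rw [← ph_recover hx, ← ph_recover hy, h1, h2]

lemma add_one_add_one (x : K) : x + 1 + 1 = x := by
  rw [add_assoc, CharTwo.add_self_eq_zero, add_zero]

lemma ph_sum_mem (hK : Fintype.card K = Fintype.card F ^ 2) {w : F} (hw : w ^ 2 + w + 1 = 0)
    {x y : K} (hx : cj F K x ≠ x) (hy : cj F K y ≠ y) (h : dF F x = dF F y)
    (h1 : y ≠ x) (h2 : y ≠ x + 1) :
    ph F x + ph F (x + 1) + (ph F y + ph F (y + 1)) ∈ circ F K := by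
  refine gg_sum hK hw (ph_mem hK hx) (ph_mem hK (nf_add_one hx)) (ph_mem hK hy)
    (ph_mem hK (nf_add_one hy)) (ph_ne_one hx) (ph_ne_one (nf_add_one hx)) ?_ ?_ ?_
  · rw [dF_nf hx, dF_nf hy] at h
    exact add_left_cancel h
  · rintro ⟨h3, h4⟩
    exact h1 (ph_ext hx hy h3 h4).symm
  · rintro ⟨h3, h4⟩
    apply h2
    refine ph_ext hy (nf_add_one hx) h4.symm ?_
    rw [add_one_add_one]; exact h3.symm

/-- A fibre cannot meet three classes `{x, x + 1}`: the three sums provided by `ph_sum_mem` would be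
norm one elements that add up to zero. -/
lemma no_three (hK : Fintype.card K = Fintype.card F ^ 2) {w : F} (hw : w ^ 2 + w + 1 = 0)
    {x y z : K} (hx : dF F x ≠ 1) (hy : dF F y = dF F x) (hz : dF F z = dF F x)
    (h1 : y ≠ x) (h2 : y ≠ x + 1) (h3 : z ≠ x) (h4 : z ≠ x + 1) (h5 : z ≠ y) (h6 : z ≠ y + 1) :
    False := by
  have e : ∀ {t : K}, dF F t = 1 ↔ cj F K t = t := dF_eq_one_iff hK hw
  have hx' : cj F K x ≠ x := fun h => hx (e.2 h)
  have hy' : cj F K y ≠ y := fun h => hx (hy ▸ e.2 h)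
  have hz' : cj F K z ≠ z := fun h => hx (hz ▸ e.2 h)
  refine no_cube hK hw (ph_sum_mem hK hw hx' hy' hy.symm h1 h2)
    (ph_sum_mem hK hw hx' hz' hz.symm h3 h4) (ph_sum_mem hK hw hy' hz' (hy.trans hz.symm) h5 h6) ?_
  linear_combination (ph F x + ph F (x + 1) + (ph F y + ph F (y + 1)) + (ph F z + ph F (z + 1))) *
    CharTwo.two_eq_zero (R := K)

end Fib
end Niho

/-! ### Collisions and quadruples -/

namespace Niho
open Finset
section Count
variable {F : Type*} [Field F] [Fintype F] [CharP F 2] [DecidableEq F]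
variable {K : Type*} [Field K] [Fintype K] [CharP K 2] [DecidableEq K] [Algebra F K]

/-- The collisions of `D`: ordered pairs `(x, y)` outside the subfield with `D(x) = D(y)` and
`y ∉ {x, x + 1}`. -/
noncomputable def colls (F K : Type*) [Field F] [Fintype F] [Field K] [Fintype K] [DecidableEq K]
    [Algebra F K] : Finset (K × K) :=
  univ.filter fun p => cj F K p.1 ≠ p.1 ∧ cj F K p.2 ≠ p.2 ∧ dF F p.1 = dF F p.2 ∧
    p.2 ≠ p.1 ∧ p.2 ≠ p.1 + 1

/-- The sum of the four norm one elements attached to a pair `(x, y)`. -/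
noncomputable def sg (F : Type*) {K : Type*} [Field F] [Fintype F] [Field K]
    [Algebra F K] (p : K × K) : K :=
  ph F p.1 + ph F (p.1 + 1) + (ph F p.2 + ph F (p.2 + 1))

/-- When `a + b + c + d = 1`, the equation `gg (s a) (s b) = gg (s c) (s d)` is linear in `s`, up to
the factor `s ^ 2`. So the scaling factor of a collision is determined by its normalized
quadruple. -/
lemma gg_scale {s a b c d : K} (hs : a + b + (c + d) = 1) (h0 : s ≠ 0) :
    gg (s * a) (s * b) = gg (s * c) (s * d) ↔
      1 + a * b + c * d = s * (a * b * (a + b) + c * d * (c + d)) := by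
  have h2 := CharTwo.two_eq_zero (R := K)
  have key : gg (s * a) (s * b) + gg (s * c) (s * d) =
      s ^ 2 * ((1 + a * b + c * d) + s * (a * b * (a + b) + c * d * (c + d))) := by
    obtain rfl : a = 1 + b + c + d := by
      linear_combination hs - (b + c + d) * h2
    unfold gg
    grind
  constructor
  · intro h
    rw [h, CharTwo.add_self_eq_zero] at key
    have := (mul_eq_zero.1 key.symm).resolve_left (pow_ne_zero 2 h0)
    exact CharTwo.add_eq_zero.1 this
  · intro h
    rw [h, CharTwo.add_self_eq_zero, mul_zero] at key
    exact CharTwo.add_eq_zero.1 key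

/-- The coefficients of the linear equation for `s` in `gg_scale` are nonzero and conjugate up to
a norm one factor, so that equation has exactly one solution, and it has norm one. -/
lemma quads_facts (hK : Fintype.card K = Fintype.card F ^ 2) {w : F} (hw : w ^ 2 + w + 1 = 0)
    {a b c d : K} (ha : a ∈ circ F K) (hb : b ∈ circ F K) (hc : c ∈ circ F K) (hd : d ∈ circ F K)
    (hs : a + b + (c + d) = 1) :
    1 + a * b + c * d ≠ 0 ∧
    a * b * (a + b) + c * d * (c + d) = a * b * (c * d) * cj F K (1 + a * b + c * d) := by
  have h2 := CharTwo.two_eq_zero (R := K)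
  have ha0 := circ_ne_zero hK ha
  have hb0 := circ_ne_zero hK hb
  have hc0 := circ_ne_zero hK hc
  have hd0 := circ_ne_zero hK hd
  refine ⟨no_cube hK hw one_mem_circ (circ_mul ha hb) (circ_mul hc hd), ?_⟩
  have hh := congrArg (cj F K) hs
  simp only [map_add, map_mul, map_one, circ_cj hK ha, circ_cj hK hb, circ_cj hK hc,
    circ_cj hK hd] at hh ⊢
  field_simp at hh ⊢
  linear_combination (a * b + c * d) * hs - hh - (a * b * c * d) * h2

lemma mem_quads {v : (K × K) × (K × K)} : v ∈ quads F K ↔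
    (v.1.1 ∈ circ F K ∧ v.1.2 ∈ circ F K ∧ v.2.1 ∈ circ F K ∧ v.2.2 ∈ circ F K) ∧
      v.1.1 + v.1.2 + (v.2.1 + v.2.2) = 1 := by
  simp only [quads, mem_filter, mem_product]; tauto

lemma mem_colls {p : K × K} : p ∈ colls F K ↔ cj F K p.1 ≠ p.1 ∧ cj F K p.2 ≠ p.2 ∧
    dF F p.1 = dF F p.2 ∧ p.2 ≠ p.1 ∧ p.2 ≠ p.1 + 1 := by
  simp only [colls, mem_filter, mem_univ, true_and]

/-- Scaling by the inverse of the sum is a bijection from collisions to quadruples. -/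
lemma card_colls (hK : Fintype.card K = Fintype.card F ^ 2) {w : F} (hw : w ^ 2 + w + 1 = 0) :
    (colls F K).card = (quads F K).card := by
  have hsg : ∀ p ∈ colls F K, sg F p ∈ circ F K := by
    intro p hp
    obtain ⟨h1, h2, h3, h4, h5⟩ := mem_colls.1 hp
    exact ph_sum_mem hK hw h1 h2 h3 h4 h5
  refine card_bij (fun p _ => (((sg F p)⁻¹ * ph F p.1, (sg F p)⁻¹ * ph F (p.1 + 1)),
    ((sg F p)⁻¹ * ph F p.2, (sg F p)⁻¹ * ph F (p.2 + 1)))) ?_ ?_ ?_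
  · intro p hp
    have hi := circ_inv hK (hsg p hp)
    have h0 := circ_ne_zero hK (hsg p hp)
    obtain ⟨h1, h2, h3, h4, h5⟩ := mem_colls.1 hp
    refine mem_quads.2 ⟨⟨circ_mul hi (ph_mem hK h1), circ_mul hi (ph_mem hK (nf_add_one h1)),
      circ_mul hi (ph_mem hK h2), circ_mul hi (ph_mem hK (nf_add_one h2))⟩, ?_⟩
    rw [← mul_add, ← mul_add, ← mul_add]
    exact inv_mul_cancel₀ h0
  · have key : ∀ p ∈ colls F K, ∀ a b c d, (sg F p)⁻¹ * ph F p.1 = a →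
        (sg F p)⁻¹ * ph F (p.1 + 1) = b → (sg F p)⁻¹ * ph F p.2 = c →
        (sg F p)⁻¹ * ph F (p.2 + 1) = d → 1 + a * b + c * d ≠ 0 ∧
        1 + a * b + c * d = sg F p * (a * b * (a + b) + c * d * (c + d)) := by
      intro p hp a b c d ha hb hc hd
      have hi := circ_inv hK (hsg p hp)
      have h0 := circ_ne_zero hK (hsg p hp)
      obtain ⟨h1, h2, h3, h4, h5⟩ := mem_colls.1 hp
      have e : ∀ x y : K, (sg F p)⁻¹ * x = y → x = sg F p * y := by
        rintro x y rfl; rw [mul_inv_cancel_left₀ h0]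
      have hs : a + b + (c + d) = 1 := by
        rw [← ha, ← hb, ← hc, ← hd, ← mul_add, ← mul_add, ← mul_add]
        exact inv_mul_cancel₀ h0
      refine ⟨(quads_facts hK hw (ha ▸ circ_mul hi (ph_mem hK h1))
        (hb ▸ circ_mul hi (ph_mem hK (nf_add_one h1))) (hc ▸ circ_mul hi (ph_mem hK h2))
        (hd ▸ circ_mul hi (ph_mem hK (nf_add_one h2))) hs).1, (gg_scale hs h0).1 ?_⟩
      rw [← e _ _ ha, ← e _ _ hb, ← e _ _ hc, ← e _ _ hd]
      rw [dF_nf h1, dF_nf h2] at h3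
      exact add_left_cancel h3
    intro p hp p' hp' h
    simp only [Prod.mk.injEq] at h
    obtain ⟨⟨ha, hb⟩, hc, hd⟩ := h
    obtain ⟨k1, k2⟩ := key p hp _ _ _ _ ha hb hc hd
    obtain ⟨-, k4⟩ := key p' hp' _ _ _ _ rfl rfl rfl rfl
    have hσ : sg F p = sg F p' := by
      refine mul_right_cancel₀ (fun h => k1 ?_) (k2.symm.trans k4)
      rw [k2, h, mul_zero]
    have h0 := inv_ne_zero (circ_ne_zero hK (hsg p hp))
    rw [← hσ] at ha hb hc hd
    obtain ⟨h1, h2, -, -, -⟩ := mem_colls.1 hp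
    obtain ⟨h1', h2', -, -, -⟩ := mem_colls.1 hp'
    exact Prod.ext (ph_ext h1 h1' (mul_left_cancel₀ h0 ha) (mul_left_cancel₀ h0 hb))
      (ph_ext h2 h2' (mul_left_cancel₀ h0 hc) (mul_left_cancel₀ h0 hd))
  · rintro ⟨⟨a, b⟩, c, d⟩ hv
    obtain ⟨⟨ha, hb, hc, hd⟩, hs⟩ := mem_quads.1 hv
    simp only at ha hb hc hd hs
    have ht := CharTwo.two_eq_zero (R := K)
    obtain ⟨f1, f2⟩ := quads_facts hK hw ha hb hc hd hs
    set D := 1 + a * b + c * d with hD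
    have hq0 := circ_ne_zero hK (circ_mul (circ_mul ha hb) (circ_mul hc hd))
    have hD' : cj F K D ≠ 0 := by simpa using f1
    -- the unique solution `s` of the linear equation in `gg_scale`
    obtain ⟨s, hsd⟩ : ∃ s, s = D * (a * b * (c * d) * cj F K D)⁻¹ := ⟨_, rfl⟩
    have hsU : s ∈ circ F K := by
      have : s = (a * b * (c * d))⁻¹ * (cj F K D / D)⁻¹ := by
        rw [hsd]; field_simp
      rw [this]
      refine circ_mul (circ_inv hK (circ_mul (circ_mul ha hb) (circ_mul hc hd))) (circ_inv hK ?_)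
      rw [mem_circ' hK, map_div₀, cj_cj hK]
      field_simp
    have hs0 := circ_ne_zero hK hsU
    have hg : gg (s * a) (s * b) = gg (s * c) (s * d) := by
      refine (gg_scale hs hs0).2 ?_
      rw [f2, hsd, inv_mul_cancel_right₀ (mul_ne_zero hq0 hD')]
    -- the four entries are pairwise distinct, since otherwise the other two would add up to `1`
    have two : ∀ {u v : K}, u ∈ circ F K → v ∈ circ F K → u + v ≠ 1 := by
      intro u v hu hv h
      refine no_cube hK hw hu hv (one_mem_circ (F := F) (K := K)) ?_
      rw [h, CharTwo.add_self_eq_zero]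
    have hab : a ≠ b := by
      rintro rfl; exact two hc hd (by linear_combination hs - a * ht)
    have hac : a ≠ c := by
      rintro rfl; exact two hb hd (by linear_combination hs - a * ht)
    have had : a ≠ d := by
      rintro rfl; exact two hb hc (by linear_combination hs - a * ht)
    have hbc : b ≠ c := by
      rintro rfl; exact two ha hd (by linear_combination hs - b * ht)
    have hbd : b ≠ d := by
      rintro rfl; exact two ha hc (by linear_combination hs - b * ht)
    have hcd : c ≠ d := by
      rintro rfl; exact two ha hb (by linear_combination hs - c * ht)
    have ggz : ∀ {u v : K}, u ∈ circ F K → v ∈ circ F K → (gg u v = 0 ↔ u = 1 ∨ v = 1) := by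
      intro u v hu hv
      have h3 := no_cube hK hw (one_mem_circ (F := F) (K := K)) hu hv
      rw [gg, mul_eq_zero, mul_eq_zero, or_iff_left h3, CharTwo.add_eq_zero, CharTwo.add_eq_zero,
        eq_comm, eq_comm (a := (1 : K))]
    have ua := circ_mul hsU ha
    have ub := circ_mul hsU hb
    have uc := circ_mul hsU hc
    have ud := circ_mul hsU hd
    -- if one of the four scaled entries were `1`, then so would be one of the opposite pair
    have z : s * a = 1 ∨ s * b = 1 ↔ s * c = 1 ∨ s * d = 1 := by
      rw [← ggz ua ub, ← ggz uc ud, hg]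
    have ne : ∀ {u v : K}, u ≠ v → s * u = 1 → s * v = 1 → False := fun h h1 h2 =>
      h (mul_left_cancel₀ hs0 (h1.trans h2.symm))
    have hne : ∀ {u v : K}, u ≠ v → s * u ≠ s * v := fun h h1 => h (mul_left_cancel₀ hs0 h1)
    have ha1 : s * a ≠ 1 := fun h => (z.1 (.inl h)).elim (ne hac h) (ne had h)
    have hb1 : s * b ≠ 1 := fun h => (z.1 (.inr h)).elim (ne hbc h) (ne hbd h)
    have hc1 : s * c ≠ 1 := fun h => (z.2 (.inl h)).elim (ne hac.symm h) (ne hbc.symm h)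
    have hd1 : s * d ≠ 1 := fun h => (z.2 (.inr h)).elim (ne had.symm h) (ne hbd.symm h)
    obtain ⟨x, hx, xa, xb⟩ := ph_surj hK ua ub ha1 hb1 (hne hab)
    obtain ⟨y, hy, yc, yd⟩ := ph_surj hK uc ud hc1 hd1 (hne hcd)
    have hsum : sg F (x, y) = s := by
      simp only [sg]
      rw [xa, xb, yc, yd, ← mul_add, ← mul_add, ← mul_add, hs, mul_one]
    refine ⟨(x, y), mem_colls.2 ⟨hx, hy, ?_, ?_, ?_⟩, ?_⟩
    · simp only
      rw [dF_nf hx, dF_nf hy, xa, xb, yc, yd, hg]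
    · intro h
      simp only at h
      rw [h, xa] at yc
      exact hne hac yc
    · intro h
      simp only at h
      rw [h, xb] at yc
      exact hne hbc yc
    · simp only [hsum, xa, xb, yc, yd, inv_mul_cancel_left₀ hs0]

end Count
end Niho

/-! ### The spectrum in terms of a Kloosterman sum -/

namespace Niho
open Finset
section Spec
variable {F : Type*} [Field F] [Fintype F] [CharP F 2] [DecidableEq F]
variable {K : Type*} [Field K] [Fintype K] [CharP K 2] [DecidableEq K] [Algebra F K]

/-- The fibre of `D` over `b`. -/
def fib (F : Type*) [Fintype F] {K : Type*} [Field K] [Fintype K] [DecidableEq K] (b : K) :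
    Finset K := univ.filter fun x => dF F x = b

lemma mem_fib {b x : K} : x ∈ fib F b ↔ dF F x = b := by simp [fib]

lemma card_fib_one (hK : Fintype.card K = Fintype.card F ^ 2) {w : F} (hw : w ^ 2 + w + 1 = 0) :
    (fib F (1 : K)).card = Fintype.card F := by
  have : fib F (1 : K) = univ.image (algebraMap F K) := by
    ext x
    rw [mem_fib, dF_eq_one_iff hK hw, mem_image]
    constructor
    · intro h
      obtain ⟨c, hc⟩ := cj_fixed hK h
      exact ⟨c, mem_univ _, hc⟩
    · rintro ⟨c, -, rfl⟩
      exact AlgHom.commutes _ _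
  rw [this, card_image_of_injective _ inj_alg, card_univ]

lemma ne_add_one (x : K) : x ≠ x + 1 := by simp

/-- Each fibre is stable under `x ↦ x + 1`; by `no_three` it contains at most two of these orbits. -/
lemma card_fib (hK : Fintype.card K = Fintype.card F ^ 2) {w : F} (hw : w ^ 2 + w + 1 = 0)
    {b : K} (hb : b ≠ 1) : (fib F b).card = 0 ∨ (fib F b).card = 2 ∨ (fib F b).card = 4 := by
  by_cases h0 : fib F b = ∅
  · left; rw [h0, card_empty]
  obtain ⟨x, hx⟩ := nonempty_iff_ne_empty.2 h0
  right
  rw [mem_fib] at hx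
  have hx1 : dF F (x + 1) = b := (dF_add_one x).trans hx
  by_cases h1 : ∃ y ∈ fib F b, y ≠ x ∧ y ≠ x + 1
  · right
    obtain ⟨y, hy, hyx, hyx1⟩ := h1
    rw [mem_fib] at hy
    have hy1 : dF F (y + 1) = b := (dF_add_one y).trans hy
    have : fib F b = {x, x + 1, y, y + 1} := by
      ext z
      simp only [mem_fib, mem_insert, mem_singleton]
      constructor
      · intro hz
        by_contra! hc
        exact no_three hK hw (hx ▸ hb) (hy.trans hx.symm) (hz.trans hx.symm) hyx hyx1
          hc.1 hc.2.1 hc.2.2.1 hc.2.2.2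
      · rintro (rfl | rfl | rfl | rfl) <;> assumption
    rw [this]
    have e1 : x ≠ y + 1 := fun h => hyx1 (by rw [h, add_one_add_one])
    have e2 : x + 1 ≠ y + 1 := fun h => hyx (add_right_cancel h).symm
    rw [card_insert_of_notMem, card_insert_of_notMem, card_insert_of_notMem, card_singleton]
    · simp
    · simp only [mem_insert, mem_singleton, not_or]
      exact ⟨hyx1.symm, e2⟩
    · simp only [mem_insert, mem_singleton, not_or]
      exact ⟨ne_add_one x, hyx.symm, e1⟩
  · left
    push Not at h1
    have : fib F b = {x, x + 1} := by
      ext z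
      simp only [mem_insert, mem_singleton]
      constructor
      · intro hz
        by_contra! hc
        exact hc.2 (h1 z hz hc.1)
      · rw [mem_fib]; rintro (rfl | rfl) <;> assumption
    rw [this, card_pair (ne_add_one x)]

/-- A point in a fibre with `n` elements takes part as first entry in `n - 2` collisions. -/
lemma card_colls_sum (hK : Fintype.card K = Fintype.card F ^ 2) {w : F}
    (hw : w ^ 2 + w + 1 = 0) :
    ((colls F K).card : ℤ) =
      ∑ b ∈ univ.erase (1 : K), ((fib F b).card : ℤ) * ((fib F b).card - 2) := by
  have h1 : ∀ b ∈ univ.erase (1 : K), ∀ x ∈ fib F b,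
      (((univ : Finset K).filter fun y => (x, y) ∈ colls F K).card : ℤ) = (fib F b).card - 2 := by
    intro b hb x hx
    have hb1 := (mem_erase.1 hb).1
    rw [mem_fib] at hx
    have e : ∀ {t : K}, dF F t = 1 ↔ cj F K t = t := dF_eq_one_iff hK hw
    have : (univ.filter fun y => (x, y) ∈ colls F K) = fib F b \ {x, x + 1} := by
      ext y
      simp only [mem_filter, mem_univ, true_and, mem_colls, mem_sdiff, mem_fib, mem_insert,
        mem_singleton, not_or]
      constructor
      · rintro ⟨-, -, h, h', h''⟩
        exact ⟨h.symm.trans hx, h', h''⟩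
      · rintro ⟨h, h', h''⟩
        refine ⟨fun h3 => hb1 ?_, fun h3 => hb1 ?_, hx.trans h.symm, h', h''⟩
        · rw [← hx, e.2 h3]
        · rw [← h, e.2 h3]
    rw [this, cast_card_sdiff, card_pair (ne_add_one x)]
    · push_cast; ring
    · intro z hz
      rw [mem_fib]
      simp only [mem_insert, mem_singleton] at hz
      rcases hz with rfl | rfl
      · exact hx
      · exact (dF_add_one x).trans hx
  have h2 : ∀ x ∈ fib F (1 : K),
      (((univ : Finset K).filter fun y => (x, y) ∈ colls F K).card : ℤ) = 0 := by
    intro x hx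
    rw [mem_fib, dF_eq_one_iff hK hw] at hx
    rw [Nat.cast_eq_zero, card_eq_zero, filter_eq_empty_iff]
    intro y _ h
    exact (mem_colls.1 h).1 hx
  have h3 : ((colls F K).card : ℤ) =
      ∑ x : K, (((univ : Finset K).filter fun y => (x, y) ∈ colls F K).card : ℤ) := by
    rw [← Nat.cast_sum, ← card_sigma]
    congr 1
    refine card_bij' (fun p _ => ⟨p.1, p.2⟩) (fun p _ => (p.1, p.2)) ?_ ?_ ?_ ?_ <;> simp
  rw [h3, ← sum_fiberwise univ (fun x => dF F x), ← add_sum_erase univ _ (mem_univ (1 : K))]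
  have e1 : ∑ x ∈ univ.filter (fun x : K => dF F x = 1),
      (((univ : Finset K).filter fun y => (x, y) ∈ colls F K).card : ℤ) = 0 := sum_eq_zero h2
  rw [e1, zero_add]
  refine sum_congr rfl fun b hb => ?_
  have e2 : ∑ x ∈ univ.filter (fun x : K => dF F x = b),
      (((univ : Finset K).filter fun y => (x, y) ∈ colls F K).card : ℤ) =
      ∑ x ∈ fib F b, (((fib F b).card : ℤ) - 2) := sum_congr rfl (h1 b hb)
  rw [e2, sum_const, nsmul_eq_mul]

/-- The number of fibres of `D` with exactly `i` elements. -/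
def om (F K : Type*) [Fintype F] [Field K] [Fintype K] [DecidableEq K] (i : ℕ) : ℕ :=
  (univ.filter fun b : K => (fib F b).card = i).card

lemma sum_fib (hK : Fintype.card K = Fintype.card F ^ 2) {w : F} (hw : w ^ 2 + w + 1 = 0)
    (h4 : 4 < Fintype.card F) (g : ℕ → ℤ) :
    ∑ b ∈ univ.erase (1 : K), g (fib F b).card = om F K 0 * g 0 + om F K 2 * g 2 + om F K 4 * g 4 := by
  have h : ∀ i : ℕ, i < 5 → ∑ b ∈ univ.erase (1 : K), (if (fib F b).card = i then (1 : ℤ) else 0) =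
      om F K i := by
    intro i hi
    have h1 := add_sum_erase univ (fun b : K => if (fib F b).card = i then (1 : ℤ) else 0)
      (mem_univ 1)
    rw [if_neg (by rw [card_fib_one hK hw]; omega), zero_add] at h1
    rw [h1, om, card_filter]
    push_cast
    rfl
  have h1 : ∀ b ∈ univ.erase (1 : K), g (fib F b).card =
      (if (fib F b).card = 0 then (1 : ℤ) else 0) * g 0 +
      (if (fib F b).card = 2 then (1 : ℤ) else 0) * g 2 +
      (if (fib F b).card = 4 then (1 : ℤ) else 0) * g 4 := by
    intro b hb
    rcases card_fib hK hw (mem_erase.1 hb).1 with h | h | h <;> simp [h]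
  rw [sum_congr rfl h1, sum_add_distrib, sum_add_distrib, ← sum_mul, ← sum_mul, ← sum_mul,
    h 0 (by norm_num), h 2 (by norm_num), h 4 (by norm_num)]

lemma om_total (hK : Fintype.card K = Fintype.card F ^ 2) {w : F} (hw : w ^ 2 + w + 1 = 0)
    (h4 : 4 < Fintype.card F) :
    (om F K 0 : ℤ) + om F K 2 + om F K 4 + 1 = (Fintype.card F : ℤ) ^ 2 := by
  have h := sum_fib (K := K) hK hw h4 (fun _ => 1)
  rw [sum_const, card_erase_of_mem (mem_univ _), card_univ, hK, nsmul_eq_mul,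
    Nat.cast_sub (Nat.one_le_pow _ _ (by omega))] at h
  push_cast at h
  linarith

lemma om_weighted (hK : Fintype.card K = Fintype.card F ^ 2) {w : F} (hw : w ^ 2 + w + 1 = 0)
    (h4 : 4 < Fintype.card F) :
    2 * (om F K 2 : ℤ) + 4 * om F K 4 = (Fintype.card F : ℤ) ^ 2 - Fintype.card F := by
  have h := sum_fib (K := K) hK hw h4 (fun i => (i : ℤ))
  have h1 : ((univ : Finset K).card : ℤ) = ∑ b : K, ((fib F b).card : ℤ) := by
    rw [← Nat.cast_sum]
    congr 1
    exact card_eq_sum_card_fiberwise fun x _ => mem_univ (dF F x)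
  rw [← add_sum_erase _ _ (mem_univ (1 : K)), card_fib_one hK hw, h, card_univ, hK] at h1
  push_cast at h1
  linarith

lemma om_four (hK : Fintype.card K = Fintype.card F ^ 2) {w : F} (hw : w ^ 2 + w + 1 = 0)
    (h4 : 4 < Fintype.card F) :
    8 * (om F K 4 : ℤ) = ((Fintype.card F : ℤ) + 1) ^ 2 - Kl w ^ 2 := by
  have h := sum_fib (K := K) hK hw h4 (fun i => (i : ℤ) * (i - 2))
  rw [← card_colls_sum hK hw, card_colls hK hw, card_quads hK hw] at h
  push_cast at h
  linarith

lemma om_card (hK : Fintype.card K = Fintype.card F ^ 2) {w : F} (hw : w ^ 2 + w + 1 = 0)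
    (h4 : 4 < Fintype.card F) : om F K (Fintype.card F) = 1 := by
  rw [om, card_eq_one]
  refine ⟨1, ?_⟩
  ext b
  simp only [mem_filter, mem_univ, true_and, mem_singleton]
  refine ⟨fun h => ?_, fun h => h ▸ card_fib_one hK hw⟩
  by_contra hb
  have := card_fib hK hw hb
  omega

lemma om_other (hK : Fintype.card K = Fintype.card F ^ 2) {w : F} (hw : w ^ 2 + w + 1 = 0)
    {i : ℕ} (h0 : i ≠ 0) (h2 : i ≠ 2) (h4 : i ≠ 4) (hq : i ≠ Fintype.card F) :
    om F K i = 0 := by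
  rw [om, card_eq_zero, filter_eq_empty_iff]
  intro b _ h
  by_cases hb : b = 1
  · subst hb
    exact hq (h.symm.trans (card_fib_one hK hw))
  · have := card_fib hK hw hb
    omega

end Spec
end Niho

/-! ### A multiplicative function on polynomials and its L-function -/

namespace Niho
open Finset Polynomial
section LFun
variable {k : Type*} [Field k] [Fintype k] [CharP k 2]

lemma finite_le {k : Type*} [Field k] [Fintype k] (d : ℕ) : {f : k[X] | f.natDegree ≤ d}.Finite := by
  refine Set.Finite.of_finite_image (f := fun (f : k[X]) (i : Fin (d + 1)) => f.coeff i)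
    (Set.toFinite _) ?_
  intro f hf g hg h
  ext i
  by_cases hi : i < d + 1
  · exact congrFun h ⟨i, hi⟩
  · have hf' : f.natDegree ≤ d := hf
    have hg' : g.natDegree ≤ d := hg
    rw [coeff_eq_zero_of_natDegree_lt (by omega), coeff_eq_zero_of_natDegree_lt (by omega)]

/-- The monic polynomials of degree `d`. -/
noncomputable def monics (k : Type*) [Field k] [Fintype k] (d : ℕ) : Finset k[X] :=
  ((finite_le (k := k) d).subset (t := {f | f.Monic ∧ f.natDegree = d})
    fun _ hf => hf.2.le).toFinset

lemma mem_monics {d : ℕ} {f : k[X]} : f ∈ monics k d ↔ f.Monic ∧ f.natDegree = d := by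
  simp [monics]

/-- The monic irreducible polynomials of degree at most `N`. -/
noncomputable def irrs (k : Type*) [Field k] [Fintype k] (N : ℕ) : Finset k[X] :=
  ((finite_le (k := k) N).subset (t := {f | f.Monic ∧ Irreducible f ∧ f.natDegree ≤ N})
    fun _ hf => hf.2.2).toFinset

lemma mem_irrs {N : ℕ} {f : k[X]} :
    f ∈ irrs k N ↔ f.Monic ∧ Irreducible f ∧ f.natDegree ≤ N := by
  simp [irrs]

open Classical in
/-- The completely multiplicative function on monic polynomials with `f ↦ χ(s + w s')`, where `s` is
the sum of the roots of `f` and `s'` is the sum of their inverses (signs do not matter in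
characteristic two). It vanishes when `0` is a root. -/
noncomputable def lam (w : k) (f : k[X]) : ℤ :=
  if f.coeff 0 = 0 then 0 else chi (f.nextCoeff + w * (f.coeff 1 / f.coeff 0))

lemma lam_mul (w : k) {f g : k[X]} (hf : f.Monic) (hg : g.Monic) :
    lam w (f * g) = lam w f * lam w g := by
  unfold lam
  rw [mul_coeff_zero]
  by_cases h1 : f.coeff 0 = 0
  · simp [h1]
  by_cases h2 : g.coeff 0 = 0
  · simp [h2]
  rw [if_neg h1, if_neg h2, if_neg (mul_ne_zero h1 h2), ← chi_add, hf.nextCoeff_mul hg,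
    mul_coeff_one]
  congr 1
  field_simp
  ring

lemma lam_one (w : k) : lam w (1 : k[X]) = 1 := by
  simp [lam, coeff_one, nextCoeff, chi_zero]

lemma lam_pow (w : k) {f : k[X]} (hf : f.Monic) (i : ℕ) : lam w (f ^ i) = lam w f ^ i := by
  induction i with
  | zero => simp [lam_one]
  | succ i ih => rw [pow_succ, lam_mul w (hf.pow i) hf, ih, pow_succ]

/-- The coefficient of `T ^ d` in the `L`-function `∑_f lam(f) T ^ deg(f)`. -/
noncomputable def Lc (w : k) (d : ℕ) : ℤ := ∑ f ∈ monics k d, lam w f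

open Classical in
/-- The coefficient of `T ^ j` in the logarithmic derivative `T L' / L`, namely the sum of
`deg(P) lam(P) ^ i` over all prime powers `P ^ i` of degree `j`. To keep the sum finite, only `P` of
degree at most `N` and exponents at most `N` are used; for `j ≤ N` nothing is lost. -/
noncomputable def Lam (w : k) (N j : ℕ) : ℤ :=
  ∑ P ∈ irrs k N, ∑ i ∈ Icc 1 N, if i * P.natDegree = j then P.natDegree * lam w P ^ i else 0

open Classical in
/-- The degree of `f` is the sum of `deg(P)` over all prime powers `P ^ i` dividing `f`; this is
the polynomial analogue of `log = Λ * 1`. -/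
lemma degree_count {N n : ℕ} (hn : n ≤ N) {f : k[X]} (hf : f ∈ monics k n) :
    (n : ℤ) = ∑ P ∈ irrs k N, ∑ i ∈ Icc 1 N, if P ^ i ∣ f then (P.natDegree : ℤ) else 0 := by
  obtain ⟨hm, hd⟩ := mem_monics.1 hf
  have h0 := hm.ne_zero
  set s := UniqueFactorizationMonoid.normalizedFactors f with hs
  have hprod : s.prod = f := by
    rw [hs, UniqueFactorizationMonoid.prod_normalizedFactors_eq h0, hm.normalize_eq_self]
  have hmon : ∀ P ∈ s, P.Monic := by
    intro P hP
    have h1 := UniqueFactorizationMonoid.normalize_normalized_factor P hP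
    have h2 := (UniqueFactorizationMonoid.irreducible_of_normalized_factor P hP).ne_zero
    rw [← h1]; exact Polynomial.monic_normalize h2
  have hsum : (n : ℤ) = ∑ P ∈ s.toFinset, (s.count P : ℤ) * P.natDegree := by
    rw [← hd, ← hprod, natDegree_multiset_prod_of_monic _ hmon,
      Finset.sum_multiset_map_count]
    push_cast
    simp
  have hsub : s.toFinset ⊆ irrs k N := by
    intro P hP
    rw [Multiset.mem_toFinset] at hP
    refine mem_irrs.2 ⟨hmon P hP, UniqueFactorizationMonoid.irreducible_of_normalized_factor P hP, ?_⟩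
    exact ((natDegree_le_of_dvd (UniqueFactorizationMonoid.dvd_of_mem_normalizedFactors hP) h0).trans
      hd.le).trans hn
  rw [hsum, sum_subset hsub (fun P _ hP => by
    rw [Multiset.mem_toFinset, ← Multiset.count_eq_zero] at hP; simp [hP])]
  refine sum_congr rfl fun P hP => ?_
  obtain ⟨hPm, hPi, hPd⟩ := mem_irrs.1 hP
  have hdvd : ∀ i : ℕ, P ^ i ∣ f ↔ i ≤ s.count P := by
    intro i
    rw [Multiset.le_count_iff_replicate_le, ← hPm.normalize_eq_self, hs,
      ← UniqueFactorizationMonoid.le_emultiplicity_iff_replicate_le_normalizedFactors hPi h0,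
      hPm.normalize_eq_self, pow_dvd_iff_le_emultiplicity]
  have hle : s.count P ≤ N := by
    have h1 := natDegree_le_of_dvd ((hdvd _).2 le_rfl) h0
    rw [natDegree_pow, hd] at h1
    have := hPi.natDegree_pos
    nlinarith
  rw [← sum_filter, sum_const, nsmul_eq_mul]
  congr 2
  have : (Icc 1 N).filter (fun i => P ^ i ∣ f) = Icc 1 (s.count P) := by
    ext i
    rw [mem_filter, hdvd, mem_Icc, mem_Icc]
    omega
  rw [this, Nat.card_Icc]
  omega

open Classical in
lemma sum_dvd (w : k) {G : k[X]} (hG : G.Monic) (n : ℕ) :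
    ∑ f ∈ monics k n, (if G ∣ f then lam w f else 0) =
      if G.natDegree ≤ n then lam w G * Lc w (n - G.natDegree) else 0 := by
  rw [← sum_filter]
  split_ifs with h
  · rw [Lc, mul_sum]
    symm
    refine sum_bij (fun g _ => G * g) ?_ ?_ ?_ ?_
    · intro g hg
      obtain ⟨h1, h2⟩ := mem_monics.1 hg
      refine mem_filter.2 ⟨mem_monics.2 ⟨hG.mul h1, ?_⟩, dvd_mul_right _ _⟩
      rw [hG.natDegree_mul h1, h2]; omega
    · intro g _ g' _ h
      exact mul_left_cancel₀ hG.ne_zero h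
    · intro f hf
      obtain ⟨h1, g, rfl⟩ := mem_filter.1 hf
      obtain ⟨h2, h3⟩ := mem_monics.1 h1
      have h4 := hG.of_mul_monic_left h2
      refine ⟨g, mem_monics.2 ⟨h4, ?_⟩, rfl⟩
      rw [hG.natDegree_mul h4] at h3
      omega
    · intro g hg
      rw [lam_mul w hG (mem_monics.1 hg).1]
  · refine sum_eq_zero fun f hf => ?_
    obtain ⟨h1, h2⟩ := mem_filter.1 hf
    obtain ⟨h3, h4⟩ := mem_monics.1 h1
    have := natDegree_le_of_dvd h2 h3.ne_zero
    omega

/-- Comparison of the coefficients of `T ^ n` in `T L' = Λ L`. -/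
lemma von_mangoldt (w : k) {N n : ℕ} (hn : n ≤ N) :
    (n : ℤ) * Lc w n = ∑ j ∈ Icc 1 n, Lam w N j * Lc w (n - j) := by
  classical
  have h1 : (n : ℤ) * Lc w n = ∑ P ∈ irrs k N, ∑ i ∈ Icc 1 N, (P.natDegree : ℤ) *
      if i * P.natDegree ≤ n then lam w P ^ i * Lc w (n - i * P.natDegree) else 0 := by
    rw [Lc, mul_sum]
    calc _ = ∑ f ∈ monics k n, ∑ P ∈ irrs k N, ∑ i ∈ Icc 1 N, (P.natDegree : ℤ) *
            (if P ^ i ∣ f then lam w f else 0) := by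
          refine sum_congr rfl fun f hf => ?_
          rw [degree_count hn hf, sum_mul]
          refine sum_congr rfl fun P _ => ?_
          rw [sum_mul]
          refine sum_congr rfl fun i _ => ?_
          split_ifs <;> simp
      _ = _ := by
          rw [sum_comm]
          refine sum_congr rfl fun P hP => ?_
          rw [sum_comm]
          refine sum_congr rfl fun i _ => ?_
          have hPm := (mem_irrs.1 hP).1
          rw [← mul_sum, sum_dvd w (hPm.pow i), lam_pow w hPm, natDegree_pow]
  rw [h1]
  simp only [Lam, sum_mul]
  conv_rhs => rw [sum_comm]
  refine sum_congr rfl fun P hP => ?_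
  conv_rhs => rw [sum_comm]
  refine sum_congr rfl fun i hi => ?_
  have hpos : 1 ≤ i * P.natDegree :=
    Nat.mul_pos (mem_Icc.1 hi).1 (mem_irrs.1 hP).2.1.natDegree_pos
  have h2 : ∀ j, (if i * P.natDegree = j then (P.natDegree : ℤ) * lam w P ^ i else 0) *
      Lc w (n - j) = if i * P.natDegree = j then (P.natDegree : ℤ) * lam w P ^ i *
      Lc w (n - i * P.natDegree) else 0 := by
    intro j; split_ifs with h <;> simp [h]
  simp only [h2]
  rw [sum_ite_eq]
  simp only [mem_Icc, hpos, true_and]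
  split_ifs <;> ring

end LFun
end Niho

/-! ### The L-polynomial over the field with four elements -/

namespace Niho
open Finset Polynomial
section LVal
variable {k : Type*} [Field k] [Fintype k] [CharP k 2]

lemma Lc_zero (w : k) : Lc w 0 = 1 := by
  have : monics k 0 = {1} := by
    ext f
    rw [mem_monics, mem_singleton]
    constructor
    · rintro ⟨h1, h2⟩
      exact h1.natDegree_eq_zero.1 h2
    · rintro rfl
      exact ⟨monic_one, natDegree_one⟩
  rw [Lc, this, sum_singleton, lam_one]

lemma Lc_one [DecidableEq k] (w : k) : Lc w 1 = Kl w := by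
  have h : Lc w 1 = ∑ a : k, lam w (X + C a) := by
    symm
    refine sum_bij (fun a _ => X + C a) ?_ ?_ ?_ ?_
    · intro a _
      exact mem_monics.2 ⟨monic_X_add_C a, natDegree_X_add_C a⟩
    · intro a _ b _ h
      simpa using h
    · intro f hf
      obtain ⟨h1, h2⟩ := mem_monics.1 hf
      exact ⟨f.coeff 0, mem_univ _, (h1.eq_X_add_C h2).symm⟩
    · intro a _; rfl
  rw [h, Kl, sum_erase_zero]
  have h0 : lam w (X + C (0 : k)) = 0 := by simp [lam]
  rw [← add_sum_erase _ _ (mem_univ (0 : k)), h0, zero_add, ← sum_erase_zero]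
  refine sum_congr rfl fun a ha => ?_
  have ha0 : a ≠ 0 := (mem_erase.1 ha).1
  simp [lam, ha0, nextCoeff_X_add_C, coeff_X, coeff_C]

/-- For `X ^ 2 + b X + c` the function is `χ((1 + w / c) b)`, whose sum over `b` vanishes unless
`c = w`. -/
lemma Lc_two {w : k} (hw : w ≠ 0) : Lc w 2 = Fintype.card k := by
  classical
  have hdeg : ∀ b c : k, (X ^ 2 + (C b * X + C c)).natDegree = 2 ∧
      (X ^ 2 + (C b * X + C c)).Monic := by
    intro b c
    have : (C b * X + C c).degree < 2 := degree_linear_lt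
    refine ⟨?_, monic_X_pow_add this⟩
    rw [natDegree_add_eq_left_of_degree_lt (by rwa [degree_X_pow]), natDegree_X_pow]
  have hlam : ∀ b c : k, lam w (X ^ 2 + (C b * X + C c)) =
      if c = 0 then 0 else chi ((1 + w * c⁻¹) * b) := by
    intro b c
    have e0 : (X ^ 2 + (C b * X + C c)).coeff 0 = c := by simp [coeff_X_pow]
    have e1 : (X ^ 2 + (C b * X + C c)).coeff 1 = b := by simp [coeff_X_pow, coeff_C]
    have e2 : (X ^ 2 + (C b * X + C c)).nextCoeff = b := by
      rw [nextCoeff_of_natDegree_pos (by rw [(hdeg b c).1]; norm_num), (hdeg b c).1, e1]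
    rw [lam, e0, e1, e2]
    congr 2
    rw [div_eq_mul_inv]; ring
  have h : Lc w 2 = ∑ c : k, ∑ b : k, lam w (X ^ 2 + (C b * X + C c)) := by
    rw [← sum_product', Lc]
    symm
    refine sum_bij (fun p _ => X ^ 2 + (C p.2 * X + C p.1)) ?_ ?_ ?_ ?_
    · intro p _
      exact mem_monics.2 ⟨(hdeg _ _).2, (hdeg _ _).1⟩
    · rintro ⟨c, b⟩ _ ⟨c', b'⟩ _ h
      have h0 := congrArg (fun f => coeff f 0) h
      have h1 := congrArg (fun f => coeff f 1) h
      simp [coeff_X_pow, coeff_C] at h0 h1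
      rw [h0, h1]
    · intro f hf
      obtain ⟨h1, h2⟩ := mem_monics.1 hf
      refine ⟨(f.coeff 0, f.coeff 1), mem_univ _, ?_⟩
      conv_rhs => rw [h1.as_sum, h2]
      simp [sum_range_succ]
      ring
    · intro p _; rfl
  rw [h, ← add_sum_erase _ _ (mem_univ w)]
  have h1 : ∑ b : k, lam w (X ^ 2 + (C b * X + C w)) = Fintype.card k := by
    simp only [hlam, if_neg hw, mul_inv_cancel₀ hw, CharTwo.add_self_eq_zero, zero_mul, chi_zero]
    simp
  rw [h1, sum_eq_zero, add_zero]
  intro c hc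
  by_cases hc0 : c = 0
  · simp only [hlam, if_pos hc0, sum_const_zero]
  · simp only [hlam, if_neg hc0]
    refine sum_chi_mul fun h => (mem_erase.1 hc).1 ?_
    rw [CharTwo.add_eq_zero] at h
    field_simp at h
    exact h

/-- In degree at least three, the second highest coefficient can be changed without affecting the two
lowest ones, so the sum cancels. -/
lemma Lc_ge_three (w : k) {d : ℕ} (hd : 3 ≤ d) : Lc w d = 0 := by
  obtain ⟨c, hc⟩ := exists_chi_neg (F := k)
  have hlt : ∀ f ∈ monics k d, (C c * X ^ (d - 1)).degree < f.degree := by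
    intro f hf
    obtain ⟨h1, h2⟩ := mem_monics.1 hf
    rw [degree_eq_natDegree h1.ne_zero, h2]
    refine (degree_C_mul_X_pow_le _ _).trans_lt ?_
    exact_mod_cast (by omega : d - 1 < d)
  have hmem : ∀ f ∈ monics k d, f + C c * X ^ (d - 1) ∈ monics k d := by
    intro f hf
    obtain ⟨h1, h2⟩ := mem_monics.1 hf
    refine mem_monics.2 ⟨h1.add_of_left (hlt f hf), ?_⟩
    rw [natDegree_add_eq_left_of_degree_lt (hlt f hf), h2]
  have h : Lc w d = ∑ f ∈ monics k d, lam w (f + C c * X ^ (d - 1)) := by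
    symm
    refine sum_nbij' (fun f => f + C c * X ^ (d - 1)) (fun f => f + C c * X ^ (d - 1))
      hmem hmem ?_ ?_ ?_
    · intro f _; rw [add_assoc, CharTwo.add_self_eq_zero, add_zero]
    · intro f _; rw [add_assoc, CharTwo.add_self_eq_zero, add_zero]
    · intro f _; rfl
  have h2 : ∀ f ∈ monics k d, lam w (f + C c * X ^ (d - 1)) = - lam w f := by
    intro f hf
    have hf' := (mem_monics.1 (hmem f hf)).2
    obtain ⟨h1, h2⟩ := mem_monics.1 hf
    have e0 : (f + C c * X ^ (d - 1)).coeff 0 = f.coeff 0 := by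
      rw [coeff_add, coeff_C_mul_X_pow, if_neg (by omega), add_zero]
    have e1 : (f + C c * X ^ (d - 1)).coeff 1 = f.coeff 1 := by
      rw [coeff_add, coeff_C_mul_X_pow, if_neg (by omega), add_zero]
    have e2 : (f + C c * X ^ (d - 1)).nextCoeff = f.nextCoeff + c := by
      rw [nextCoeff_of_natDegree_pos (by omega), nextCoeff_of_natDegree_pos (by omega), hf', h2,
        coeff_add, coeff_C_mul_X_pow, if_pos rfl]
    rw [lam, lam, e0, e1, e2]
    split_ifs
    · simp
    · rw [add_right_comm, chi_add _ c, hc]; ring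
  rw [sum_congr rfl h2, sum_neg_distrib, ← Lc] at h
  linarith

lemma kl_four [DecidableEq k] (hk : Fintype.card k = 4) {w : k} (hw : w ^ 2 + w + 1 = 0) :
    Kl w = -1 := by
  have h2 := CharTwo.two_eq_zero (R := k)
  have hw0 : w ≠ 0 := by rintro rfl; simp at hw
  have hw1 : w ≠ 1 := by
    rintro rfl
    exact one_ne_zero (α := k) (by linear_combination hw - h2)
  have hww : w + 1 ≠ 0 := by rwa [Ne, CharTwo.add_eq_zero]
  have huniv : ({0, 1, w, w + 1} : Finset k) = univ := by
    rw [← card_eq_iff_eq_univ, hk]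
    rw [card_insert_of_notMem, card_insert_of_notMem, card_insert_of_notMem, card_singleton]
    · simp
    · simp [hw0, hw1.symm]
    · simp [hw0.symm, hww.symm]
  have he : univ.erase (0 : k) = {1, w, w + 1} := by
    rw [← huniv, erase_insert]
    simp [hw0.symm, hww.symm]
  have hcw : chi w = -1 := by
    refine (chi_cases w).resolve_left fun h => ?_
    obtain ⟨y, hy⟩ := chi_eq_one.1 h
    have hy4 : y ^ 4 = y := hk ▸ FiniteField.pow_card y
    refine one_ne_zero (α := k) ?_
    rw [← hy] at hw
    linear_combination hw - hy4 - (y ^ 3 + y ^ 2 + y) * h2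
  have hcw1 : chi (w + 1) = -1 := by rw [chi_add, chi_one hw, hcw]; norm_num
  have hinv : (w + 1)⁻¹ = w := by
    refine inv_eq_of_mul_eq_one_left ?_
    linear_combination hw - h2
  rw [Kl, he, sum_insert, sum_insert, sum_singleton, inv_one, mul_one, mul_inv_cancel₀ hw0, hinv,
    add_comm 1 w, hcw1, show w + 1 + w * w = 0 by linear_combination hw, chi_zero]
  · norm_num
  · simp
  · simp [hw0, hw1.symm]

/-- The recursion that results from `L(T) = 1 - T + 4 T ^ 2`. -/
lemma Lam_rec (hk : Fintype.card k = 4) {w : k} (hw : w ^ 2 + w + 1 = 0) (N : ℕ) :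
    (1 ≤ N → Lam w N 1 = -1) ∧ (2 ≤ N → Lam w N 2 = 7) ∧
    ∀ n, n + 3 ≤ N → Lam w N (n + 3) = Lam w N (n + 2) - 4 * Lam w N (n + 1) := by
  classical
  have hw0 : w ≠ 0 := by rintro rfl; simp at hw
  have l0 := Lc_zero w
  have l1 : Lc w 1 = -1 := by rw [Lc_one, kl_four hk hw]
  have l2 : Lc w 2 = 4 := by rw [Lc_two hw0, hk]; rfl
  have a1 : 1 ≤ N → Lam w N 1 = -1 := by
    intro h
    have := von_mangoldt w h
    simp [l0, l1] at this
    exact this.symm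
  refine ⟨a1, ?_, ?_⟩
  · intro h
    have h1 := von_mangoldt w h
    rw [sum_Icc_succ_top (by norm_num)] at h1
    simp [l0, l1, l2, a1 (by omega)] at h1
    linarith
  · intro n hn
    have h1 := von_mangoldt w hn
    rw [sum_Icc_succ_top (by omega), sum_Icc_succ_top (by omega), sum_Icc_succ_top (by omega),
      sum_eq_zero, Lc_ge_three w (by omega)] at h1
    · rw [show n + 2 + 1 - (n + 2 + 1) = 0 by omega, show n + 2 + 1 - (n + 1 + 1) = 1 by omega,
        show n + 2 + 1 - (n + 1) = 2 by omega, l0, l1, l2] at h1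
      linarith
    · intro j hj
      rw [mem_Icc] at hj
      rw [Lc_ge_three w (by omega), mul_zero]

end LVal
end Niho

/-! ### Kloosterman sums over extensions -/

namespace Niho
open Finset Polynomial
section Ext
variable {k : Type*} [Field k] [Fintype k] [CharP k 2]
variable {F : Type*} [Field F] [Fintype F] [CharP F 2] [Algebra k F]

lemma trace_sq (y : F) : Algebra.trace k F (y ^ 2) = Algebra.trace k F y ^ 2 := by
  apply (algebraMap k F).injective
  rw [map_pow (algebraMap k F), FiniteField.algebraMap_trace_eq_sum_pow, FiniteField.algebraMap_trace_eq_sum_pow,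
    sum_pow_char]
  refine sum_congr rfl fun i _ => ?_
  rw [← pow_mul, ← pow_mul, mul_comm]

/-- Transitivity of the trace: the characters of `F` and of its subfield `k` are compatible. -/
lemma chi_trace (x : F) : chi (Algebra.trace k F x) = chi x := by
  have h1 : ∀ x : F, chi x = 1 → chi (Algebra.trace k F x) = 1 := by
    intro x hx
    obtain ⟨y, rfl⟩ := chi_eq_one.1 hx
    rw [map_add, trace_sq, chi_as]
  obtain ⟨c, hc⟩ := exists_chi_neg (F := k)
  obtain ⟨z, rfl⟩ := Algebra.trace_surjective k F c
  have hz : chi z = -1 := (chi_cases z).resolve_left fun h => by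
    have := h1 z h
    omega
  rcases chi_cases x with h | h
  · rw [h, h1 x h]
  · have h3 := h1 (x + z) (by rw [chi_add, h, hz]; norm_num)
    rw [map_add, chi_add, hc] at h3
    rw [h]; linarith

lemma chi_nsmul (r : ℕ) (c : k) : chi (r * c) = chi c ^ r := by
  induction r with
  | zero => simp [chi_zero]
  | succ r ih => rw [Nat.cast_succ, add_mul, one_mul, chi_add, ih, pow_succ]

open IntermediateField in
lemma adjoin_inv (x : F) : k⟮x⁻¹⟯ = k⟮x⟯ := by
  apply le_antisymm
  · rw [adjoin_simple_le_iff]; exact inv_mem (mem_adjoin_simple_self k x)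
  · rw [adjoin_simple_le_iff]
    simpa using inv_mem (mem_adjoin_simple_self k x⁻¹)

open IntermediateField in
/-- Up to sign, the sum of the conjugates of `1 / x` is read off from the lowest coefficients of the
minimal polynomial of `x`, since the minimal polynomial of `1 / x` is its normalized reversal. -/
lemma nextCoeff_inv {x : F} (hx : x ≠ 0) :
    (minpoly k x⁻¹).nextCoeff = (minpoly k x).coeff 1 / (minpoly k x).coeff 0 := by
  have hxi : IsIntegral k x := .of_finite k x
  have hxi' : IsIntegral k x⁻¹ := .of_finite k x⁻¹
  set p := minpoly k x with hp
  have hc0 : p.coeff 0 ≠ 0 := minpoly.coeff_zero_ne_zero hxi hx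
  have hdeg : (minpoly k x⁻¹).natDegree = p.natDegree := by
    rw [← adjoin.finrank hxi', ← adjoin.finrank hxi, adjoin_inv]
  have htr : p.natTrailingDegree = 0 := natTrailingDegree_eq_zero.2 (.inr hc0)
  have hrd : p.reverse.natDegree = p.natDegree := by rw [reverse_natDegree, htr, Nat.sub_zero]
  have hrl : p.reverse.leadingCoeff = p.coeff 0 := by
    rw [reverse_leadingCoeff, trailingCoeff, htr]
  have hQm : (C (p.coeff 0)⁻¹ * p.reverse).Monic := by
    rw [Monic, leadingCoeff_mul, leadingCoeff_C, hrl, inv_mul_cancel₀ hc0]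
  have hQd : (C (p.coeff 0)⁻¹ * p.reverse).natDegree = p.natDegree := by
    rw [natDegree_C_mul (inv_ne_zero hc0), hrd]
  have hQ0 : aeval x⁻¹ (C (p.coeff 0)⁻¹ * p.reverse) = 0 := by
    let _ : Invertible x := invertibleOfNonzero hx
    have h := (eval₂_reverse_eq_zero_iff (algebraMap k F) x p).2 (minpoly.aeval k x)
    rw [invOf_eq_inv] at h
    rw [map_mul, aeval_def _ p.reverse, h, mul_zero]
  have hQ := eq_of_monic_of_dvd_of_natDegree_le (minpoly.monic hxi') hQm
    (minpoly.dvd k _ hQ0) (by rw [hQd, hdeg])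
  have hpos : 0 < p.natDegree := minpoly.natDegree_pos hxi
  rw [← hQ, nextCoeff_of_natDegree_pos (by rw [hQd]; exact hpos), hQd, coeff_C_mul,
    coeff_reverse, revAt_le (by omega), show p.natDegree - (p.natDegree - 1) = 1 by omega,
    div_eq_mul_inv, mul_comm]

open IntermediateField in
/-- The summand of the Kloosterman sum at `x` is determined by the minimal polynomial of `x`, through
the formula for the trace in terms of it. -/
lemma chi_eq_lam (w : k) {n : ℕ} (hn : Module.finrank k F = n) {x : F} (hx : x ≠ 0) :
    ∃ i, i * (minpoly k x).natDegree = n ∧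
      chi (x + algebraMap k F w * x⁻¹) = lam w (minpoly k x) ^ i := by
  have hxi : IsIntegral k x := .of_finite k x
  have hfin : Module.finrank k⟮x⁻¹⟯ F = Module.finrank k⟮x⟯ F := by rw [adjoin_inv]
  refine ⟨Module.finrank k⟮x⟯ F, ?_, ?_⟩
  · rw [← adjoin.finrank hxi, mul_comm, Module.finrank_mul_finrank, hn]
  · rw [← chi_trace (k := k), map_add, ← Algebra.smul_def, map_smul,
      trace_eq_finrank_mul_minpoly_nextCoeff, trace_eq_finrank_mul_minpoly_nextCoeff,
      hfin, nextCoeff_inv hx, lam, if_neg (minpoly.coeff_zero_ne_zero hxi hx), ← chi_nsmul]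
    congr 1
    rw [CharTwo.neg_eq, CharTwo.neg_eq, smul_eq_mul]
    ring

open Classical in
lemma card_minpoly {n : ℕ} (hn : Module.finrank k F = n) {P : k[X]} (hm : P.Monic)
    (hi : Irreducible P) (hd : P.natDegree ∣ n) :
    (univ.filter fun x : F => minpoly k x = P).card = P.natDegree := by
  have hcard : Fintype.card F = Nat.card k ^ n := by
    rw [Module.card_eq_pow_finrank (K := k), hn, Nat.card_eq_fintype_card]
  have hdvd := (hi.natDegree_dvd_iff_dvd_X_pow_card_pow_sub_X).1 hd
  rw [← hcard] at hdvd
  have hsplit : (P.map (algebraMap k F)).Splits := by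
    have h1 : (X ^ Fintype.card F - X : F[X]).Splits := by
      rw [splits_iff_card_roots, FiniteField.roots_X_pow_card_sub_X,
        FiniteField.X_pow_card_sub_X_natDegree_eq F Fintype.one_lt_card]
      rfl
    refine h1.of_dvd (FiniteField.X_pow_card_sub_X_ne_zero F Fintype.one_lt_card) ?_
    simpa using Polynomial.map_dvd (algebraMap k F) hdvd
  rw [← card_rootSet_eq_natDegree (PerfectField.separable_of_irreducible hi) hsplit,
    ← Set.toFinset_card]
  congr 1
  ext x
  rw [mem_filter, Set.mem_toFinset, mem_rootSet]
  constructor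
  · rintro ⟨-, rfl⟩
    exact ⟨hm.ne_zero, minpoly.aeval k x⟩
  · rintro ⟨-, h⟩
    exact ⟨mem_univ _, (minpoly.eq_of_irreducible_of_monic hi h hm).symm⟩

/-- Grouping the elements `x` by their minimal polynomials turns the Kloosterman sum over an extension
of degree `n` into the `n`-th coefficient of `T L' / L`. -/
lemma kl_eq_Lam [DecidableEq F] (w : k) {n : ℕ} (hn : Module.finrank k F = n) :
    Kl (algebraMap k F w) = Lam w n n := by
  classical
  have hn0 : 0 < n := hn ▸ Module.finrank_pos
  have hmem : ∀ x : F, minpoly k x ∈ irrs k n := by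
    intro x
    have hxi : IsIntegral k x := .of_finite k x
    refine mem_irrs.2 ⟨minpoly.monic hxi, minpoly.irreducible hxi, ?_⟩
    rw [← hn]; exact minpoly.natDegree_le x
  have hdvd : ∀ x : F, (minpoly k x).natDegree ∣ n := by
    intro x
    have hxi : IsIntegral k x := .of_finite k x
    rw [← hn]; exact minpoly.degree_dvd hxi
  have hval : ∀ x : F, (if x = 0 then 0 else chi (x + algebraMap k F w * x⁻¹)) =
      lam w (minpoly k x) ^ (n / (minpoly k x).natDegree) := by
    intro x
    have hpos : 0 < (minpoly k x).natDegree := minpoly.natDegree_pos (.of_finite k x)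
    split_ifs with hx
    · subst hx
      rw [minpoly.zero, natDegree_X, Nat.div_one, lam, if_pos (by simp), zero_pow hn0.ne']
    · obtain ⟨i, h1, h2⟩ := chi_eq_lam (F := F) w hn hx
      rw [h2, ← h1, Nat.mul_div_cancel _ hpos]
  have h1 : Kl (algebraMap k F w) =
      ∑ x : F, lam w (minpoly k x) ^ (n / (minpoly k x).natDegree) := by
    rw [Kl, sum_congr rfl fun x _ => (hval x).symm, ← add_sum_erase _ _ (mem_univ (0 : F)),
      if_pos rfl, zero_add]
    refine sum_congr rfl fun x hx => ?_
    rw [if_neg (mem_erase.1 hx).1]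
  rw [h1, Lam, ← sum_fiberwise_of_maps_to (t := irrs k n) (fun x _ => hmem x)]
  refine sum_congr rfl fun P hP => ?_
  obtain ⟨hPm, hPi, hPd⟩ := mem_irrs.1 hP
  rw [sum_congr rfl (g := fun _ => lam w P ^ (n / P.natDegree))
    (fun x hx => by rw [(mem_filter.1 hx).2]), sum_const, nsmul_eq_mul]
  have hpos := hPi.natDegree_pos
  by_cases hd : P.natDegree ∣ n
  · obtain ⟨r, rfl⟩ := hd
    rw [card_minpoly hn hPm hPi (dvd_mul_right _ _), Nat.mul_div_cancel_left _ hpos,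
      sum_eq_single r]
    · rw [if_pos (mul_comm _ _)]
    · intro i _ hi
      rw [if_neg fun h => hi (Nat.eq_of_mul_eq_mul_right hpos (h.trans (mul_comm _ _)))]
    · intro h
      exact absurd (mem_Icc.2 ⟨Nat.pos_of_mul_pos_left hn0, Nat.le_mul_of_pos_left r hpos⟩) h
  · rw [sum_eq_zero fun i _ => if_neg fun h => hd ⟨i, by rw [← h, mul_comm]⟩]
    rw [filter_eq_empty_iff.2, card_empty, Nat.cast_zero, zero_mul]
    rintro x _ rfl
    exact hd (hdvd x)

end Ext
end Niho

/-! ### The sequence τ -/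

namespace Niho
open Finset Polynomial

/-- The identity `τ_{2n} = τ_n ^ 2 - 2`, proved together with the value of `τ_{2n+1}` and the invariant
quadratic form of the recursion. -/
lemma tau_double {τ : ℕ → ℚ} (hτ1 : τ 1 = 1 / 2) (hτ2 : τ 2 = -7 / 4)
    (hτr : ∀ j, 3 ≤ j → τ j = τ (j - 1) / 2 - τ (j - 2)) (n : ℕ) :
    τ (2 * (n + 1)) = τ (n + 1) ^ 2 - 2 := by
  have hrec : ∀ j, τ (j + 3) = τ (j + 2) / 2 - τ (j + 1) := fun j => hτr (j + 3) (by omega)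
  suffices h : τ (2 * (n + 1)) = τ (n + 1) ^ 2 - 2 ∧
      τ (2 * (n + 1) + 1) = τ (n + 1) * τ (n + 2) - 1 / 2 ∧
      τ (n + 2) ^ 2 - τ (n + 1) * τ (n + 2) / 2 + τ (n + 1) ^ 2 = 15 / 4 from h.1
  induction n with
  | zero =>
    have h3 := hrec 0
    norm_num at h3 ⊢
    rw [h3, hτ1, hτ2]
    norm_num
  | succ n ih =>
    obtain ⟨h1, h2, h3⟩ := ih
    have e1 : τ (n + 3) = τ (n + 2) / 2 - τ (n + 1) := hrec n
    have e2 : τ (2 * (n + 2)) = τ (2 * (n + 1) + 1) / 2 - τ (2 * (n + 1)) := hrec (2 * n + 1)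
    have e3 : τ (2 * (n + 2) + 1) = τ (2 * (n + 2)) / 2 - τ (2 * (n + 1) + 1) := hrec (2 * n + 2)
    have g1 : τ (2 * (n + 2)) = τ (n + 2) ^ 2 - 2 := by
      rw [e2, h1, h2]; linear_combination -h3
    refine ⟨g1, ?_, ?_⟩
    · change τ (2 * (n + 2) + 1) = τ (n + 2) * τ (n + 3) - 1 / 2
      rw [e3, g1, h2, e1]; ring
    · change τ (n + 3) ^ 2 - τ (n + 2) * τ (n + 3) / 2 + τ (n + 2) ^ 2 = 15 / 4
      rw [e1]; linear_combination h3

/-- The recursions of `Λ` and `τ` agree up to the factor `-2 ^ j`. -/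
lemma Lam_eq_tau {τ : ℕ → ℚ} (hτ1 : τ 1 = 1 / 2) (hτ2 : τ 2 = -7 / 4)
    (hτr : ∀ j, 3 ≤ j → τ j = τ (j - 1) / 2 - τ (j - 2))
    {k : Type*} [Field k] [Fintype k] [CharP k 2] (hk : Fintype.card k = 4)
    {w : k} (hw : w ^ 2 + w + 1 = 0) (N j : ℕ) (h1 : 1 ≤ j) (hj : j ≤ N) :
    (Lam w N j : ℚ) = - 2 ^ j * τ j := by
  obtain ⟨a1, a2, a3⟩ := Lam_rec hk hw N
  induction j using Nat.strong_induction_on with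
  | _ j ih =>
    match j, h1, hj, ih with
    | 1, _, hj, _ => rw [a1 hj, hτ1]; norm_num
    | 2, _, hj, _ => rw [a2 hj, hτ2]; norm_num
    | j + 3, _, hj, ih =>
      have e1 : τ (j + 3) = τ (j + 2) / 2 - τ (j + 1) := hτr (j + 3) (by omega)
      rw [a3 j hj, e1]
      push_cast
      rw [ih (j + 2) (by omega) (by omega) (by omega), ih (j + 1) (by omega) (by omega) (by omega)]
      ring

lemma exists_omega {k : Type*} [Field k] [Fintype k] (hk : Fintype.card k = 4) :
    ∃ w : k, w ^ 2 + w + 1 = 0 := by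
  classical
  obtain ⟨w, hw⟩ : ∃ w, w ∉ ({0, 1} : Finset k) := by
    by_contra! h
    have h1 : (univ : Finset k).card ≤ 2 := (card_le_card fun x _ => h x).trans card_le_two
    rw [card_univ, hk] at h1
    omega
  simp only [mem_insert, mem_singleton, not_or] at hw
  have h4 : w ^ 4 = w := hk ▸ FiniteField.pow_card w
  have h5 : w * (w - 1) * (w ^ 2 + w + 1) = 0 := by linear_combination h4
  exact ⟨w, (mul_eq_zero.1 h5).resolve_left (mul_ne_zero hw.1 (sub_ne_zero.2 hw.2))⟩

end Niho

/-! ### The differential spectrum -/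

/-- The differential spectrum of F(x) = x^{3q-2} over F_{q^2},
q = 2^m, m ≥ 4 even: ω_0 = (5q² + (4-τ_m)q - 7)/8, ω_2 = (q² + (τ_m-2)q - 1)/4,
ω_4 = (q² - τ_m q + 1)/8, ω_q = 1, and all other ω_i vanish. -/
theorem stmt_15 (m : ℕ) (hm : 4 ≤ m) (hme : Even m) (q : ℕ) (hq : q = 2 ^ m)
    (K : Type*) [Field K] [Fintype K] [CharP K 2] (hK : Fintype.card K = q ^ 2)
    (τ : ℕ → ℚ) (hτ1 : τ 1 = 1 / 2) (hτ2 : τ 2 = -7 / 4)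
    (hτr : ∀ k, 3 ≤ k → τ k = τ (k - 1) / 2 - τ (k - 2))
    (δ : K → ℕ)
    (hδ : ∀ b : K, δ b = {x : K | (x + 1) ^ (3 * q - 2) + x ^ (3 * q - 2) = b}.ncard)
    (ω : ℕ → ℕ) (hω : ∀ i : ℕ, ω i = {b : K | δ b = i}.ncard) :
    (ω 0 : ℚ) = (5 * (q : ℚ) ^ 2 + (4 - τ m) * (q : ℚ) - 7) / 8 ∧
    (ω 2 : ℚ) = ((q : ℚ) ^ 2 + (τ m - 2) * (q : ℚ) - 1) / 4 ∧
    (ω 4 : ℚ) = ((q : ℚ) ^ 2 - τ m * (q : ℚ) + 1) / 8 ∧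
    ω q = 1 ∧
    (∀ i : ℕ, i ≠ 0 → i ≠ 2 → i ≠ 4 → i ≠ q → ω i = 0) := by
  classical
  obtain ⟨n, rfl⟩ : ∃ n, m = 2 * (n + 1) := by
    obtain ⟨n, hn⟩ := hme
    exact ⟨n - 1, by omega⟩
  set F := GaloisField 2 (2 * (n + 1)) with hF
  set k := GaloisField 2 2 with hk
  have : Fintype F := Fintype.ofFinite F
  have : Fintype k := Fintype.ofFinite k
  have cF : Fintype.card F = q := by
    rw [← Nat.card_eq_fintype_card, GaloisField.card 2 _ (by omega), hq]
  have ck : Fintype.card k = 4 := by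
    rw [← Nat.card_eq_fintype_card, GaloisField.card 2 2 (by omega)]
    norm_num
  -- the tower `𝔽₄ ⊆ 𝔽_q ⊆ K`, with `𝔽₄` and `𝔽_q` as abstract fields embedded in `K`
  have fF : Module.finrank (ZMod 2) F = 2 * (n + 1) := GaloisField.finrank 2 (by omega)
  have fk : Module.finrank (ZMod 2) k = 2 := GaloisField.finrank 2 (by omega)
  let _ : Algebra (ZMod 2) K := ZMod.algebra K 2
  have fK : Module.finrank (ZMod 2) K = 2 * (n + 1) * 2 := by
    have h := Module.card_eq_pow_finrank (K := ZMod 2) (V := K)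
    rw [hK, hq, ZMod.card, ← pow_mul] at h
    exact (Nat.pow_right_injective le_rfl h).symm
  obtain ⟨i1⟩ := FiniteField.nonempty_algHom_of_finrank_dvd (F := ZMod 2) (K := k) (L := F)
    (by rw [fF, fk]; exact dvd_mul_right _ _)
  obtain ⟨i2⟩ := FiniteField.nonempty_algHom_of_finrank_dvd (F := ZMod 2) (K := F) (L := K)
    (by rw [fF, fK]; exact dvd_mul_right _ _)
  let _ : Algebra k F := i1.toRingHom.toAlgebra
  let _ : Algebra F K := i2.toRingHom.toAlgebra
  have hfin : Module.finrank k F = n + 1 := by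
    have h := Module.card_eq_pow_finrank (K := k) (V := F)
    rw [cF, ck, hq, pow_mul] at h
    exact (Nat.pow_right_injective (by norm_num) h).symm
  obtain ⟨w, hw⟩ := Niho.exists_omega ck
  have hw' : algebraMap k F w ^ 2 + algebraMap k F w + 1 = 0 := by
    rw [← map_pow, ← map_add, ← map_one (algebraMap k F), ← map_add, hw, map_zero]
  have hK' : Fintype.card K = Fintype.card F ^ 2 := by rw [cF, hK]
  have hq16 : 16 ≤ q := by
    rw [hq]
    exact Nat.pow_le_pow_right (n := 2) (by norm_num) hm
  have h4 : 4 < Fintype.card F := by omega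
  have hδ' : ∀ b, δ b = (Niho.fib F b).card := by
    intro b
    rw [hδ, ← Set.ncard_coe_finset, ← cF]
    congr 1
    ext x
    rw [Finset.mem_coe, Niho.mem_fib]
    exact Iff.rfl
  have hω' : ∀ i, ω i = Niho.om F K i := by
    intro i
    rw [hω, Niho.om, ← Set.ncard_coe_finset]
    congr 1
    ext b
    simp [hδ']
  have e1 := Niho.om_total hK' hw' h4
  have e2 := Niho.om_weighted hK' hw' h4
  have e3 := Niho.om_four hK' hw' h4
  rw [Niho.kl_eq_Lam w hfin] at e3
  simp only [← hω', cF] at e1 e2 e3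
  have e1' := congrArg (Int.cast : ℤ → ℚ) e1
  have e2' := congrArg (Int.cast : ℤ → ℚ) e2
  have e3' := congrArg (Int.cast : ℤ → ℚ) e3
  push_cast at e1' e2' e3'
  have hq' : (q : ℚ) = (2 ^ (n + 1)) ^ 2 := by
    rw [hq, ← pow_mul, mul_comm]; push_cast; rfl
  have hL : (Niho.Lam w (n + 1) (n + 1) : ℚ) ^ 2 = q * (τ (2 * (n + 1)) + 2) := by
    rw [Niho.Lam_eq_tau hτ1 hτ2 hτr ck hw _ _ (by omega) le_rfl,
      Niho.tau_double hτ1 hτ2 hτr, hq']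
    ring
  rw [hL] at e3'
  refine ⟨by linarith, by linarith, by linarith, ?_, ?_⟩
  · rw [hω', ← cF]
    exact Niho.om_card hK' hw' h4
  · intro i h0 h2 h4 hq
    rw [hω']
    exact Niho.om_other hK' hw' h0 h2 h4 (by rwa [cF])
end

section
/- Let q = 2^m where m ≥ 4 is an even integer, and let F(x) = x^{3q-2} be the power function over F_{q^2}. Then F is locally differentially 4-uniform: for every b ∈ F_{q^2} \ F_2 the number δ(1, b) of x ∈ F_{q^2} with F(x + 1) + F(x) = b satisfies δ(1, b) ≤ 4, and moreover there exists b ∈ F_{q^2} \ F_2 with δ(1, b) = 4. -/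
/-!
Write `σ x = x ^ q` for the involution of `K` over its subfield `L` with `q` elements, so that
`F x * x ^ 2 = σ x ^ 3`. With `c = b + 1` (and `x ∉ {0, 1}`, which only yield `b = 1`), the equation
`F (x + 1) + F x = b` becomes

  `c * (x ^ 2 + x) ^ 2 = (x + σ x) ^ 2 * (x ^ 2 + σ x)`   (`key_eq`).

**Upper bound.** Put `r = (x ^ 2 + σ x) / (x ^ 2 + x)`. Then `r ≠ 1`,
`σ r * (r ^ 2 + c) = r + c`, and `(x ^ 2 + x) * r * (r + 1) ^ 2 = c` (`valid_r`). By the last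
identity `r` determines `x` up to `x ↦ x + 1`, so it suffices that at most two values of `r` occur
(`not_three`). Eliminating `σ r` between the second identity and its conjugate gives
`σ c * r ^ 4 + c * r + σ c * c ^ 2 + c ^ 2 = 0` (`quartic`), so the difference `d` of two values has
`σ c * d ^ 3 = c`. Three values are therefore `r`, `r + d`, `r + w * d` with `w ^ 2 + w + 1 = 0`;
since `m` is even, `σ w = w`, and comparing the three identities forces `r = w ^ 2 * d`. Then
`σ c * r ^ 3 = c`, and the quartic gives `σ c = 1`, i.e. `c = 1`, which is excluded.

**The value 4.** Look for solutions with `σ z = z + 1`. With `v = z ^ 2 + z ∈ L` the equation reads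
`c * v ^ 2 = v + 1`, and the two values `v = e + 1` and `v = e⁻¹ + 1` give the same
`c = e / (e + 1) ^ 2`. Let `A` (respectively `H`) be the set of values `x ^ 2 + x` with
`σ x = x + 1` (respectively `σ x = x`): these are the elements of `L` of absolute trace 1
(respectively 0). Since `1 ∈ H`, what is needed is `e ∈ A` with `e⁻¹ ∈ A` and `e ∉ 𝔽₄`
(`exists_pair`). If there is none, inversion maps `A \ 𝔽₄` injectively into `H \ 𝔽₄`. If
`𝔽₄ ⊆ H` this contradicts `|A| = |H|`. Otherwise the two sets have the same size, so inversion swaps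
them; but then for `s ∈ L \ 𝔽₄` the elements `s⁻¹` and `(s + 1)⁻¹` lie in the same one of `A`, `H`,
so that their sum `(s ^ 2 + s)⁻¹` lies in `H`, although it is the inverse of an element of
`H \ 𝔽₄`.
-/

namespace LocalDiff
variable {K : Type*} [Field K] [CharP K 2]

/-! ### At most two values of `r` -/

/-- Here `s` and `C` stand for the conjugates of `r` and `c`. Eliminating `s` gives a quintic in `r`
with the spurious root `r = 1`; what remains is this quartic, which is affine over `𝔽₄`. -/
lemma quartic {c C r s : K} (hr : r ≠ 1)
    (h : s * (r ^ 2 + c) = r + c) (h' : r * (s ^ 2 + C) = s + C) :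
    C * r ^ 4 + c * r + C * c ^ 2 + c ^ 2 = 0 := by
  have h2 : (2 : K) = 0 := CharTwo.two_eq_zero
  have key : (r + 1) * (C * r ^ 4 + c * r + C * c ^ 2 + c ^ 2) = 0 := by
    grind
  have hr1 : r + 1 ≠ 0 := by grind
  exact (mul_eq_zero.mp key).resolve_left hr1

lemma cube_of_diff {c C r₁ r₂ : K} (hne : r₁ ≠ r₂)
    (h₁ : C * r₁ ^ 4 + c * r₁ + C * c ^ 2 + c ^ 2 = 0)
    (h₂ : C * r₂ ^ 4 + c * r₂ + C * c ^ 2 + c ^ 2 = 0) : C * (r₁ + r₂) ^ 3 = c := by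
  have h2 : (2 : K) = 0 := CharTwo.two_eq_zero
  have hd : r₁ + r₂ ≠ 0 := by grind
  apply mul_left_cancel₀ hd
  grind

/-- Here `s` and `D` stand for the conjugates of `r` and `d`; as `w` is fixed by conjugation, the
hypotheses are the equation `σ r * (r ^ 2 + c) = r + c` at `r`, `r + d` and `r + w * d`. -/
lemma three_aux {c r s d D w : K} (hw : w ^ 2 + w + 1 = 0)
    (e₁ : s * (r ^ 2 + c) = r + c) (e₂ : (s + D) * ((r + d) ^ 2 + c) = r + d + c)
    (e₃ : (s + w * D) * ((r + w * d) ^ 2 + c) = r + w * d + c) :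
    d ^ 2 * (s + w ^ 2 * D) = 0 := by
  have h2 : (2 : K) = 0 := CharTwo.two_eq_zero
  have a₂ : s * d ^ 2 + D * (r ^ 2 + c) + D * d ^ 2 = d := by grind
  have a₃ : s * w * d ^ 2 + D * (r ^ 2 + c) + w ^ 2 * D * d ^ 2 = d := by
    have hw0 : w ≠ 0 := by rintro rfl; simp at hw
    apply mul_left_cancel₀ hw0
    linear_combination e₃ - e₁ - (s + w * D) * r * w * d * h2
  have : (w + 1) * (d ^ 2 * (s + w ^ 2 * D)) = 0 := by grind
  refine (mul_eq_zero.mp this).resolve_left ?_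
  intro h
  have : w = 1 := by grind
  subst this
  exact one_ne_zero (by linear_combination hw - h2 : (1 : K) = 0)

lemma not_three (σ : K →+* K) (hσ : ∀ x, σ (σ x) = x)
    (hω : ∀ w : K, w ^ 2 + w + 1 = 0 → σ w = w) {c : K} (hc0 : c ≠ 0) (hc1 : c ≠ 1)
    {r₁ r₂ r₃ : K} (h12 : r₁ ≠ r₂) (h13 : r₁ ≠ r₃) (h23 : r₂ ≠ r₃)
    (n₁ : r₁ ≠ 1) (n₂ : r₂ ≠ 1) (n₃ : r₃ ≠ 1)
    (e₁ : σ r₁ * (r₁ ^ 2 + c) = r₁ + c) (e₂ : σ r₂ * (r₂ ^ 2 + c) = r₂ + c)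
    (e₃ : σ r₃ * (r₃ ^ 2 + c) = r₃ + c) : False := by
  have h2 : (2 : K) = 0 := CharTwo.two_eq_zero
  have conj : ∀ {r : K}, σ r * (r ^ 2 + c) = r + c → r * (σ r ^ 2 + σ c) = σ r + σ c := by
    intro r h
    simpa [hσ] using congrArg σ h
  have q₁ := quartic n₁ e₁ (conj e₁)
  have q₂ := quartic n₂ e₂ (conj e₂)
  have q₃ := quartic n₃ e₃ (conj e₃)
  have c12 := cube_of_diff h12 q₁ q₂
  have c13 := cube_of_diff h13 q₁ q₃
  have c23 := cube_of_diff h23 q₂ q₃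
  have hC : σ c ≠ 0 := by simpa using hc0
  have hC1 : σ c ≠ 1 := fun h => hc1 (by simpa [hσ] using congrArg σ h)
  obtain ⟨d, hd⟩ : ∃ d, d = r₁ + r₂ := ⟨_, rfl⟩
  have hd0 : d ≠ 0 := by grind
  obtain ⟨w, hw⟩ : ∃ w, r₁ + r₃ = w * d := ⟨(r₁ + r₃) / d, by field_simp⟩
  have hw0 : w ≠ 0 := by grind
  have hw3 : w ^ 3 = 1 := by
    have : σ c * d ^ 3 ≠ 0 := mul_ne_zero hC (pow_ne_zero _ hd0)
    apply mul_left_cancel₀ this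
    rw [hw] at c13; rw [← hd] at c12
    linear_combination c13 - c12
  have hww : w ^ 2 + w + 1 = 0 := by
    have : (w + 1) * (w ^ 2 + w + 1) = 0 := by grind
    refine (mul_eq_zero.mp this).resolve_left ?_
    intro h
    apply h23
    grind
  have r2 : r₂ = r₁ + d := by grind
  have r3 : r₃ = r₁ + w * d := by grind
  have s2 : σ r₂ = σ r₁ + σ d := by rw [r2, map_add]
  have s3 : σ r₃ = σ r₁ + w * σ d := by rw [r3, map_add, map_mul, hω w hww]
  rw [s2, r2] at e₂
  rw [s3, r3] at e₃
  rw [← hd] at c12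
  have hs : σ r₁ = w ^ 2 * σ d := by
    have : d ^ 2 * (σ r₁ + w ^ 2 * σ d) = 0 := by
      exact three_aux hww e₁ e₂ e₃
    have := (mul_eq_zero.mp this).resolve_left (pow_ne_zero _ hd0)
    grind
  have hr : r₁ = w ^ 2 * d := by
    have := congrArg σ hs
    simpa [hσ, hω w hww] using this
  have : c ^ 2 * (σ c + 1) = 0 := by
    have hr3 : r₁ ^ 3 = d ^ 3 := by
      rw [hr]; linear_combination d ^ 3 * (w ^ 3 + 1) * hw3
    linear_combination q₁ - r₁ * σ c * hr3 - r₁ * c12 - c * r₁ * h2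
  rcases mul_eq_zero.mp this with h | h
  · exact hc0 (pow_eq_zero_iff two_ne_zero |>.mp h)
  · apply hC1; grind

/-! ### The equation in terms of `x` and its conjugate -/

/-- Here `y` is the conjugate of `x`, and `F`, `G` are the values of the power function at `x` and
`x + 1`. -/
lemma key_eq {b x y : K} {F G : K} (hx : x ≠ 0) (hx1 : x + 1 ≠ 0)
    (hF : F * x ^ 2 = y ^ 3) (hG : G * (x + 1) ^ 2 = (y + 1) ^ 3) :
    G + F = b ↔ (b + 1) * (x ^ 2 + x) ^ 2 = (x + y) ^ 2 * (x ^ 2 + y) := by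
  have h2 : (2 : K) = 0 := CharTwo.two_eq_zero
  have hw : (x ^ 2 + x) ^ 2 ≠ 0 := by
    have : x ^ 2 + x = x * (x + 1) := by ring
    rw [this]; positivity
  constructor
  · rintro rfl
    grind
  · intro h
    apply mul_left_cancel₀ hw
    grind

/-- The last identity shows that `r` determines `x ^ 2 + x`. -/
lemma valid_r (σ : K →+* K) (hσ : ∀ x, σ (σ x) = x) {c x : K} (hc0 : c ≠ 0)
    (hw : x ^ 2 + x ≠ 0) (h : c * (x ^ 2 + x) ^ 2 = (x + σ x) ^ 2 * (x ^ 2 + σ x)) {r : K}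
    (hr : r = (x ^ 2 + σ x) / (x ^ 2 + x)) :
    r ≠ 1 ∧ σ r * (r ^ 2 + c) = r + c ∧ (x ^ 2 + x) * (r * (r + 1) ^ 2) = c := by
  have h2 : (2 : K) = 0 := CharTwo.two_eq_zero
  have hw' : σ x ^ 2 + σ x ≠ 0 := by
    rw [← map_pow, ← map_add]; exact (map_ne_zero σ).mpr hw
  have hs : σ r = (σ x ^ 2 + x) / (σ x ^ 2 + σ x) := by
    rw [hr]; simp [hσ]
  rw [eq_div_iff hw] at hr
  rw [eq_div_iff hw'] at hs
  generalize σ r = s at *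
  generalize σ x = y at *
  have hr1 : (x ^ 2 + x) * (r + 1) = x + y := by linear_combination hr + x ^ 2 * h2
  have hc : c = (r + 1) ^ 2 * (r * (x ^ 2 + x)) := by
    apply mul_right_cancel₀ (pow_ne_zero 2 hw)
    rw [h, hr, ← hr1]; ring
  refine ⟨?_, ?_, ?_⟩
  · rintro rfl
    apply hc0
    rw [hc]; linear_combination 2 * (x ^ 2 + x) * h2
  · have e1 : (x ^ 2 + x) ^ 2 * (r ^ 2 + c) = (x ^ 2 + y) * (y ^ 2 + y) := by
      rw [mul_add, mul_comm _ c, h, ← mul_pow, mul_comm _ r, hr]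
      linear_combination (x ^ 2 + y) * (x ^ 2 + x * y) * h2
    have e2 : (x ^ 2 + x) ^ 2 * (r + c) = (x ^ 2 + y) * (y ^ 2 + x) := by
      rw [mul_add, mul_comm _ c, h]
      linear_combination (x ^ 2 + x) * hr + (x ^ 2 + y) * (x ^ 2 + x * y) * h2
    apply mul_left_cancel₀ (pow_ne_zero 2 hw)
    rw [e2]
    linear_combination s * e1 + (x ^ 2 + y) * hs
  · rw [hc]; ring


/-! ### Trace classes in the fixed field -/

lemma exists_omega {K : Type*} [Field K] [Fintype K] (h3 : 3 ∣ Fintype.card K - 1) : ∃ w : K, w ^ 2 + w + 1 = 0 := by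
  classical
  rw [← Fintype.card_units] at h3
  have : Fact (Nat.Prime 3) := ⟨Nat.prime_three⟩
  obtain ⟨u, hu⟩ := exists_prime_orderOf_dvd_card 3 h3
  refine ⟨u, ?_⟩
  have h1 : (u : K) ^ 3 = 1 := by
    have := pow_orderOf_eq_one u
    rw [hu] at this
    rw [← Units.val_pow_eq_pow_val, this, Units.val_one]
  have hne : (u : K) - 1 ≠ 0 := by
    intro h
    have : u = 1 := by
      ext; simpa [sub_eq_zero] using h
    rw [this, orderOf_one] at hu
    omega
  apply mul_left_cancel₀ hne
  linear_combination h1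

/-- The map `x ↦ σ x + x` has image in the fixed field and is a homomorphism whose kernel is the
fixed field; as the latter has at most `q` elements, it has exactly `q` and the map is onto it. -/
lemma card_fixed_and_surj [Fintype K] [DecidableEq K] (σ : K →+* K) (hσ : ∀ x, σ (σ x) = x) (q : ℕ)
    (hK : Fintype.card K = q ^ 2)
    (hle : (Finset.univ.filter fun x : K => σ x = x).card ≤ q) :
    (Finset.univ.filter fun x : K => σ x = x).card = q ∧ ∃ x : K, σ x = x + 1 := by
  have h2 : (2 : K) = 0 := CharTwo.two_eq_zero
  set L := Finset.univ.filter fun x : K => σ x = x with hL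
  set I := Finset.univ.image fun x : K => σ x + x with hI
  have hIL : I ⊆ L := by
    intro y hy
    obtain ⟨x, -, rfl⟩ := Finset.mem_image.mp hy
    simp [hL, hσ, add_comm]
  have hcard : q ^ 2 ≤ L.card * I.card := by
    rw [← hK, ← Finset.card_univ]
    apply Finset.card_le_mul_card_image
    intro y hy
    obtain ⟨x₀, -, hx₀⟩ := Finset.mem_image.mp hy
    apply Finset.card_le_card_of_injOn (fun x => x + x₀)
    · intro x hx
      simp only [Finset.coe_filter, Finset.mem_univ, true_and, Set.mem_ofPred_eq] at hx
      simp only [hL, Finset.coe_filter, Finset.mem_univ, true_and, Set.mem_ofPred_eq, map_add]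
      linear_combination hx - hx₀ + (σ x₀ - x) * h2
    · intro a _ b _ hab
      exact add_right_cancel hab
  have hI' := Finset.card_le_card hIL
  have hLq : L.card = q := by
    by_contra hne
    have : L.card < q := lt_of_le_of_ne hle hne
    nlinarith
  refine ⟨hLq, ?_⟩
  have hIL' : I = L := by
    apply Finset.eq_of_subset_of_card_le hIL
    by_contra! hlt
    rw [hLq] at hlt hcard
    nlinarith
  have : (1 : K) ∈ I := by rw [hIL']; simp [hL]
  obtain ⟨x, -, hx⟩ := Finset.mem_image.mp this
  exact ⟨x, by linear_combination hx - x * h2⟩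

/-- `e` has the form `x ^ 2 + x` with `σ x = x + a`. For `a = 0` and `a = 1` these are the elements
of the fixed field with absolute trace `0` and `1` respectively. -/
def ASVal (σ : K →+* K) (a e : K) : Prop := ∃ x, σ x = x + a ∧ x ^ 2 + x = e

lemma ASVal.add {σ : K →+* K} {a b e f : K} (he : ASVal σ a e) (hf : ASVal σ b f) :
    ASVal σ (a + b) (e + f) := by
  have h2 : (2 : K) = 0 := CharTwo.two_eq_zero
  obtain ⟨x, hx, rfl⟩ := he
  obtain ⟨y, hy, rfl⟩ := hf
  exact ⟨x + y, by rw [map_add, hx, hy]; ring, by linear_combination x * y * h2⟩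

lemma ASVal.disjoint {σ : K →+* K} {e : K} (h0 : ASVal σ 0 e) (h1 : ASVal σ 1 e) : False := by
  have h2 : (2 : K) = 0 := CharTwo.two_eq_zero
  obtain ⟨x, hx, hxe⟩ := h0
  obtain ⟨y, hy, hye⟩ := h1
  have : (x + y) * (x + y + 1) = 0 := by linear_combination hxe - hye + (x * y + y ^ 2 + y) * h2
  have hs : σ (x + y) = x + y + 1 := by rw [map_add, hx, hy]; ring
  rcases mul_eq_zero.mp this with h | h
  · rw [h, map_zero] at hs; simp at hs
  · have h' : x + y = 1 := by linear_combination h - h2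
    rw [h', map_one] at hs
    exact one_ne_zero (by linear_combination -hs : (1 : K) = 0)

lemma sq_add_eq {x y : K} (h : x ^ 2 + x = y ^ 2 + y) : x = y ∨ x = y + 1 := by
  have h2 : (2 : K) = 0 := CharTwo.two_eq_zero
  have : (x + y) * (x + y + 1) = 0 := by linear_combination h + (x * y + y ^ 2 + y) * h2
  rcases mul_eq_zero.mp this with h | h
  · left; linear_combination h - y * h2
  · right; linear_combination h - (y + 1) * h2

lemma card_le_two_mul_image [DecidableEq K] (S : Finset K) :
    S.card ≤ 2 * (S.image fun x => x ^ 2 + x).card := by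
  apply Finset.card_le_mul_card_image
  intro e he
  obtain ⟨x₀, -, rfl⟩ := Finset.mem_image.mp he
  refine (Finset.card_le_card (t := {x₀, x₀ + 1}) ?_).trans Finset.card_le_two
  intro x hx
  have := (Finset.mem_filter.mp hx).2
  rcases sq_add_eq this with h | h <;> simp [h]

/-- There is `e` outside `𝔽₄` such that `e` and `e⁻¹` both have absolute trace `1`. -/
lemma exists_pair [Fintype K] (σ : K →+* K) (hσ : ∀ x, σ (σ x) = x)
    (hω : ∀ w : K, w ^ 2 + w + 1 = 0 → σ w = w) (w : K) (hw : w ^ 2 + w + 1 = 0)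
    (q : ℕ) (hq : 4 < q) (hK : Fintype.card K = q ^ 2)
    (hle : Nat.card {x : K // σ x = x} ≤ q) :
    ∃ e : K, ASVal σ 1 e ∧ ASVal σ 1 e⁻¹ ∧ e ^ 2 + e + 1 ≠ 0 := by
  classical
  have h2 : (2 : K) = 0 := CharTwo.two_eq_zero
  rw [Nat.card_eq_fintype_card, Fintype.card_subtype] at hle
  obtain ⟨hL, x₀, hx₀⟩ := card_fixed_and_surj σ hσ q hK hle
  set L := Finset.univ.filter fun x : K => σ x = x with hLdef
  set H := L.image fun x => x ^ 2 + x with hH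
  set A := (L.image (x₀ + ·)).image fun x => x ^ 2 + x with hA
  have hH2 : q ≤ 2 * H.card := hL ▸ card_le_two_mul_image L
  have hA2 : q ≤ 2 * A.card := by
    have := card_le_two_mul_image (L.image (x₀ + ·))
    rwa [Finset.card_image_of_injective _ (add_right_injective x₀), hL] at this
  have memH : ∀ e, e ∈ H ↔ ASVal σ 0 e := by
    intro e; simp [hH, hLdef, ASVal]
  have memA : ∀ e, e ∈ A ↔ ASVal σ 1 e := by
    intro e
    simp only [hA, hLdef, ASVal, Finset.mem_image, Finset.mem_filter, Finset.mem_univ, true_and]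
    constructor
    · rintro ⟨_, ⟨x, hx, rfl⟩, rfl⟩
      exact ⟨_, by rw [map_add, hx, hx₀]; ring, rfl⟩
    · rintro ⟨y, hy, rfl⟩
      refine ⟨y, ⟨x₀ + y, ?_, by linear_combination x₀ * h2⟩, rfl⟩
      rw [map_add, hy, hx₀]; linear_combination h2
  have hdisj : Disjoint A H := by
    rw [Finset.disjoint_left]
    intro e h1 h0
    exact ASVal.disjoint ((memH e).mp h0) ((memA e).mp h1)
  have hsub : A ∪ H ⊆ L := by
    intro e he
    have : σ e = e := by
      rcases Finset.mem_union.mp he with h | h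
      · obtain ⟨x, hx, rfl⟩ := (memA e).mp h
        rw [map_add, map_pow, hx]; linear_combination (x + 1) * h2
      · obtain ⟨x, hx, rfl⟩ := (memH e).mp h
        rw [map_add, map_pow, hx]; ring
    simp [hLdef, this]
  have hcardU := Finset.card_union_of_disjoint hdisj
  have hcl := Finset.card_le_card hsub
  have hAH : A.card = H.card := by omega
  have hUL : A ∪ H = L := Finset.eq_of_subset_of_card_le hsub (by omega)
  have cover : ∀ e, σ e = e → ASVal σ 0 e ∨ ASVal σ 1 e := by
    intro e he
    have : e ∈ A ∪ H := by rw [hUL]; simp [hLdef, he]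
    rcases Finset.mem_union.mp this with h | h
    · exact Or.inr ((memA e).mp h)
    · exact Or.inl ((memH e).mp h)
  have fixA : ∀ e, ASVal σ 1 e → σ e = e := by
    intro e he
    have : e ∈ L := hsub (Finset.mem_union_left _ ((memA e).mpr he))
    simpa [hLdef] using this
  have hwne : w ≠ 0 := by rintro rfl; simp at hw
  have one_H : ASVal σ 0 (1 : K) :=
    ⟨w, by simpa using hω w hw, by linear_combination hw - h2⟩
  have zero_H : ASVal σ 0 (0 : K) := ⟨0, by simp, by simp⟩
  have rootw : ∀ e : K, e ^ 2 + e + 1 = 0 → e = w ∨ e = w + 1 := fun e he =>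
    sq_add_eq (by linear_combination he - hw)
  by_contra! hno
  have invA : ∀ e, ASVal σ 1 e → e ^ 2 + e + 1 ≠ 0 → ASVal σ 0 e⁻¹ := by
    intro e he hne
    rcases cover e⁻¹ (by rw [map_inv₀, fixA e he]) with h | h
    · exact h
    · exact absurd (hno e he h) hne
  have A_ne : ∀ e, ASVal σ 1 e → e ≠ 0 := by
    rintro e he rfl
    exact ASVal.disjoint zero_H he
  rcases cover w (hω w hw) with hwH | hwA
  -- `𝔽₄ ⊆ H`: inversion would embed `A` into `H \ {0}`, which is smaller.
  · have hw1 : ASVal σ 0 (w + 1) := by simpa using hwH.add one_H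
    have hle2 : A.card ≤ (H.erase 0).card := by
      apply Finset.card_le_card_of_injOn (fun e => e⁻¹)
      · intro e he
        have he := (memA e).mp he
        rw [Finset.mem_coe, Finset.mem_erase, memH]
        refine ⟨inv_ne_zero (A_ne e he), invA e he ?_⟩
        intro h
        rcases rootw e h with rfl | rfl
        · exact ASVal.disjoint hwH he
        · exact ASVal.disjoint hw1 he
      · intro a _ b _ hab
        exact inv_injective hab
    rw [Finset.card_erase_of_mem ((memH 0).mpr zero_H)] at hle2
    omega
  -- `𝔽₄ ∩ H = {0, 1}`: inversion is a bijection from `A \ 𝔽₄` onto `H \ 𝔽₄`.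
  · have hw1 : ASVal σ 1 (w + 1) := by simpa using hwA.add one_H
    set A₁ := (A.erase w).erase (w + 1) with hA₁
    set H₁ := (H.erase 0).erase 1 with hH₁
    have hcA : A₁.card = A.card - 2 := by
      rw [hA₁, Finset.card_erase_of_mem, Finset.card_erase_of_mem ((memA _).mpr hwA)]
      · omega
      · exact Finset.mem_erase.mpr ⟨by simp, (memA _).mpr hw1⟩
    have hcH : H₁.card = H.card - 2 := by
      rw [hH₁, Finset.card_erase_of_mem, Finset.card_erase_of_mem ((memH _).mpr zero_H)]
      · omega
      · exact Finset.mem_erase.mpr ⟨by simp, (memH _).mpr one_H⟩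
    have hinv : A₁.image (fun e => e⁻¹) = H₁ := by
      apply Finset.eq_of_subset_of_card_le
      · intro f hf
        obtain ⟨e, he, rfl⟩ := Finset.mem_image.mp hf
        simp only [hA₁, Finset.mem_erase, memA] at he
        simp only [hH₁, Finset.mem_erase, memH]
        refine ⟨?_, inv_ne_zero (A_ne e he.2.2), invA e he.2.2 ?_⟩
        · intro h
          rw [inv_eq_one] at h
          exact ASVal.disjoint one_H (h ▸ he.2.2)
        · intro h
          rcases rootw e h with h | h
          · exact he.2.1 h
          · exact he.1 h
      · rw [Finset.card_image_of_injective _ inv_injective]; omega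
    have invH : ∀ h, ASVal σ 0 h → h ≠ 0 → h ≠ 1 → ASVal σ 1 h⁻¹ := by
      intro h hh h0 h1
      have : h ∈ H₁ := by simp [hH₁, memH, hh, h0, h1]
      rw [← hinv] at this
      obtain ⟨e, he, rfl⟩ := Finset.mem_image.mp this
      simp only [hA₁, Finset.mem_erase, memA] at he
      simpa using he.2.2
    obtain ⟨s, hsL, hs4⟩ : ∃ s ∈ L, s ∉ ({0, 1, w, w + 1} : Finset K) := by
      apply Finset.exists_mem_notMem_of_card_lt_card
      exact lt_of_le_of_lt Finset.card_le_four (by omega)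
    simp only [Finset.mem_insert, Finset.mem_singleton, not_or] at hs4
    obtain ⟨s0, s1, sw, sw1⟩ := hs4
    have hs : σ s = s := by simpa [hLdef] using hsL
    have t0 : s + 1 ≠ 0 := fun h => s1 (by linear_combination h - h2)
    have hroot : s ^ 2 + s + 1 ≠ 0 := fun h => by
      rcases rootw s h with h | h
      · exact sw h
      · exact sw1 h
    have hA1 : ASVal σ 1 (s ^ 2 + s)⁻¹ := by
      apply invH
      · exact ⟨s, by simpa using hs, rfl⟩
      · rw [show s ^ 2 + s = s * (s + 1) by ring]
        exact mul_ne_zero s0 t0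
      · intro h
        exact hroot (by linear_combination h + h2)
    have hsum : (s ^ 2 + s)⁻¹ = s⁻¹ + (s + 1)⁻¹ := by
      rw [show s ^ 2 + s = s * (s + 1) by ring]
      field_simp
      linear_combination -s * h2
    have hB : ASVal σ 0 (s⁻¹ + (s + 1)⁻¹) := by
      rcases cover s hs with h | h
      · have h' : ASVal σ 0 (s + 1) := by simpa using h.add one_H
        have := (invH s h s0 s1).add (invH (s + 1) h' t0 (by simpa using s0))
        rwa [show (1 : K) + 1 = 0 by linear_combination h2] at this
      · have h' : ASVal σ 1 (s + 1) := by simpa using h.add one_H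
        have := (invA s h hroot).add (invA (s + 1) h' (by
          intro h
          apply hroot
          linear_combination h - (s + 1) * h2))
        simpa using this
    rw [← hsum] at hB
    exact ASVal.disjoint hB hA1

end LocalDiff

/-- F(x) = x^{3q-2} over F_{q^2} (q = 2^m, m ≥ 4 even) is locally
differentially 4-uniform: δ(1,b) ≤ 4 for all b ∉ F_2, and the value 4 is attained. -/
theorem stmt_16 (m : ℕ) (hm : 4 ≤ m) (hme : Even m) (q : ℕ) (hq : q = 2 ^ m)
    (K : Type*) [Field K] [Fintype K] [CharP K 2] (hK : Fintype.card K = q ^ 2) :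
    (∀ b : K, b ≠ 0 → b ≠ 1 →
        {x : K | (x + 1) ^ (3 * q - 2) + x ^ (3 * q - 2) = b}.ncard ≤ 4) ∧
    (∃ b : K, b ≠ 0 ∧ b ≠ 1 ∧
        {x : K | (x + 1) ^ (3 * q - 2) + x ^ (3 * q - 2) = b}.ncard = 4) := by
  classical
  have h2 : (2 : K) = 0 := CharTwo.two_eq_zero
  have hq16 : 16 ≤ q := by
    rw [hq]; exact (Nat.pow_le_pow_right (n := 2) (by norm_num) hm)
  have hq3 : ∃ k, q = 3 * k + 1 := by
    obtain ⟨j, rfl⟩ := hme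
    have : q % 3 = 1 := by
      rw [hq, ← two_mul, pow_mul, Nat.pow_mod]; norm_num
    exact ⟨q / 3, by omega⟩
  obtain ⟨σ, hσdef⟩ : ∃ σ : K →+* K, ∀ x, σ x = x ^ q :=
    ⟨iterateFrobenius K 2 m, fun x => by rw [iterateFrobenius_def, hq]⟩
  have hσ : ∀ x, σ (σ x) = x := by
    intro x
    rw [hσdef, hσdef, ← pow_mul, ← sq, ← hK, FiniteField.pow_card]
  have hω : ∀ w : K, w ^ 2 + w + 1 = 0 → σ w = w := by
    intro w hw
    obtain ⟨k, hk⟩ := hq3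
    have h3 : w ^ 3 = 1 := by linear_combination (w - 1) * hw
    rw [hσdef, hk, pow_succ, pow_mul, h3, one_pow, one_mul]
  have hpow : ∀ x : K, x ^ (3 * q - 2) * x ^ 2 = σ x ^ 3 := by
    intro x
    rw [hσdef, ← pow_add, ← pow_mul]; congr 1; omega
  have hne0 : 3 * q - 2 ≠ 0 := by omega
  have hiff : ∀ x b : K, b ≠ 1 →
      ((x + 1) ^ (3 * q - 2) + x ^ (3 * q - 2) = b ↔ x ^ 2 + x ≠ 0 ∧
        (b + 1) * (x ^ 2 + x) ^ 2 = (x + σ x) ^ 2 * (x ^ 2 + σ x)) := by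
    intro x b hb
    have hfac : x ^ 2 + x = x * (x + 1) := by ring
    by_cases hx : x = 0
    · subst hx; simp [hne0, hb.symm]
    by_cases hx1 : x + 1 = 0
    · have : x = 1 := by linear_combination hx1 - h2
      subst this
      simp [hne0, hb.symm, show (1 : K) + 1 = 0 by linear_combination h2]
    rw [LocalDiff.key_eq (y := σ x) hx hx1 (hpow x)
      (by rw [hpow (x + 1), map_add, map_one])]
    simp [hfac, hx, hx1]
  have upper : ∀ b : K, b ≠ 0 → b ≠ 1 →
      {x : K | (x + 1) ^ (3 * q - 2) + x ^ (3 * q - 2) = b}.ncard ≤ 4 := by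
    intro b hb0 hb1
    have hc0 : b + 1 ≠ 0 := fun h => hb1 (by linear_combination h - h2)
    have hc1 : b + 1 ≠ 1 := by simpa using hb0
    rw [Set.ncard_eq_toFinset_card']
    set S := {x : K | (x + 1) ^ (3 * q - 2) + x ^ (3 * q - 2) = b}.toFinset with hS
    -- `ρ x` is the invariant `r`; it is constant on pairs `{x, x + 1}` and takes at most two values.
    let ρ : K → K := fun x => (x ^ 2 + σ x) / (x ^ 2 + x)
    have hρ : ∀ x ∈ S, ρ x ≠ 1 ∧ σ (ρ x) * (ρ x ^ 2 + (b + 1)) = ρ x + (b + 1) ∧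
        (x ^ 2 + x) * (ρ x * (ρ x + 1) ^ 2) = b + 1 := by
      intro x hx
      rw [hS, Set.mem_toFinset, Set.mem_ofPred_eq, hiff x b hb1] at hx
      exact LocalDiff.valid_r σ hσ hc0 hx.1 hx.2 rfl
    have hfib : S.card ≤ 2 * (S.image ρ).card := by
      apply Finset.card_le_mul_card_image
      intro r hr
      obtain ⟨x₀, hx₀, rfl⟩ := Finset.mem_image.mp hr
      refine (Finset.card_le_card (t := {x₀, x₀ + 1}) ?_).trans Finset.card_le_two
      intro x hx
      obtain ⟨hxS, hxr⟩ := Finset.mem_filter.mp hx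
      have e₀ := (hρ x₀ hx₀).2.2
      have e := (hρ x hxS).2.2
      rw [hxr, ← e₀] at e
      have hne : ρ x₀ * (ρ x₀ + 1) ^ 2 ≠ 0 := by
        intro h; rw [h, mul_zero] at e₀; exact hc0 e₀.symm
      rcases LocalDiff.sq_add_eq (mul_right_cancel₀ hne e) with h | h <;> simp [h]
    have himg : (S.image ρ).card ≤ 2 := by
      by_contra! h
      obtain ⟨r₁, r₂, r₃, m₁, m₂, m₃, h12, h13, h23⟩ := Finset.two_lt_card_iff.mp h
      obtain ⟨x₁, hx₁, rfl⟩ := Finset.mem_image.mp m₁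
      obtain ⟨x₂, hx₂, rfl⟩ := Finset.mem_image.mp m₂
      obtain ⟨x₃, hx₃, rfl⟩ := Finset.mem_image.mp m₃
      exact LocalDiff.not_three σ hσ hω hc0 hc1 h12 h13 h23 (hρ _ hx₁).1 (hρ _ hx₂).1
        (hρ _ hx₃).1 (hρ _ hx₁).2.1 (hρ _ hx₂).2.1 (hρ _ hx₃).2.1
    omega
  refine ⟨upper, ?_⟩
  obtain ⟨w, hw⟩ : ∃ w : K, w ^ 2 + w + 1 = 0 := by
    apply LocalDiff.exists_omega
    obtain ⟨k, hk⟩ := hq3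
    refine ⟨3 * k ^ 2 + 2 * k, ?_⟩
    rw [hK, hk, Nat.sub_eq_iff_eq_add (Nat.one_le_pow _ _ (by omega))]
    ring
  have hle : Nat.card {x : K // σ x = x} ≤ q := by
    rw [Nat.card_eq_fintype_card, Fintype.card_subtype]
    have hp : (Polynomial.X ^ q - Polynomial.X : Polynomial K) ≠ 0 :=
      FiniteField.X_pow_card_sub_X_ne_zero K (by omega)
    have hsub : (Finset.univ.filter fun x : K => σ x = x) ⊆
        (Polynomial.X ^ q - Polynomial.X : Polynomial K).roots.toFinset := by
      intro x hx
      have hx := (Finset.mem_filter.mp hx).2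
      rw [hσdef] at hx
      rw [Multiset.mem_toFinset, Polynomial.mem_roots hp]
      simp [hx]
    refine (Finset.card_le_card hsub).trans ((Multiset.toFinset_card_le _).trans ?_)
    refine (Polynomial.card_roots' _).trans ?_
    rw [FiniteField.X_pow_card_sub_X_natDegree_eq K (by omega)]
  obtain ⟨e, ⟨x, hx, hxe⟩, ⟨y, hy, hye⟩, hroot⟩ :=
    LocalDiff.exists_pair σ hσ hω w hw q (by omega) hK hle
  have hσw := hω w hw
  have hA1 : LocalDiff.ASVal σ 0 (1 : K) :=
    ⟨w, by simpa using hσw, by linear_combination hw - h2⟩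
  have he0 : e ≠ 0 := by
    rintro rfl
    exact LocalDiff.ASVal.disjoint (σ := σ) ⟨0, by simp, by simp⟩ ⟨x, hx, hxe⟩
  have he1 : e ≠ 1 := by
    rintro rfl
    exact LocalDiff.ASVal.disjoint hA1 ⟨x, hx, hxe⟩
  have he1' : e + 1 ≠ 0 := fun h => he1 (by linear_combination h - h2)
  set b : K := e / (e + 1) ^ 2 + 1 with hb
  have hb1 : b ≠ 1 := by simp [hb, he0, he1']
  have hb0 : b ≠ 0 := by
    intro h
    rw [hb] at h
    apply hroot
    field_simp at h
    linear_combination h - e * h2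
  have sol : ∀ z v : K, σ z = z + 1 → z ^ 2 + z = v → v ≠ 0 → (b + 1) * v ^ 2 = v + 1 →
      (z + 1) ^ (3 * q - 2) + z ^ (3 * q - 2) = b := by
    intro z v hz hzv hv hbv
    rw [hiff z b hb1]
    refine ⟨hzv ▸ hv, ?_⟩
    rw [hzv, hbv, hz]
    linear_combination -hzv - (2 * (z ^ 2 + z) * (z ^ 2 + z + 1)) * h2
  have hbp : b + 1 = e / (e + 1) ^ 2 := by rw [hb]; linear_combination h2
  have v1 : (b + 1) * (e + 1) ^ 2 = (e + 1) + 1 := by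
    rw [hbp, div_mul_cancel₀ _ (pow_ne_zero 2 he1')]; linear_combination -h2
  have v2 : (b + 1) * (e⁻¹ + 1) ^ 2 = (e⁻¹ + 1) + 1 := by
    have : e⁻¹ + 1 = (e + 1) / e := by field_simp; ring
    rw [show e⁻¹ + 1 + 1 = e⁻¹ by linear_combination h2, this, hbp]
    field_simp
  have n2 : e⁻¹ + 1 ≠ 0 := by
    intro h
    apply he1
    rw [← inv_inv e, show e⁻¹ = 1 by linear_combination h - h2, inv_one]
  -- Adding `w` to a root replaces the value `f` of `z ^ 2 + z` by `f + 1`, as `w ^ 2 + w = 1`.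
  have shift : ∀ z f : K, z ^ 2 + z = f → (z + w) ^ 2 + (z + w) = f + 1 := by
    intro z f h
    linear_combination h + hw + (z * w - 1) * h2
  have sx : σ (x + w) = x + w + 1 := by rw [map_add, hx, hσw]; ring
  have sy : σ (y + w) = y + w + 1 := by rw [map_add, hy, hσw]; ring
  have plus : ∀ z : K, (z + 1) ^ (3 * q - 2) + z ^ (3 * q - 2) = b →
      (z + 1 + 1) ^ (3 * q - 2) + (z + 1) ^ (3 * q - 2) = b := by
    intro z hz
    rw [show z + 1 + 1 = z by linear_combination h2, add_comm]; exact hz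
  have hX := sol _ _ sx (shift x e hxe) he1' v1
  have hY := sol _ _ sy (shift y _ hye) n2 v2
  have hne : e ≠ e⁻¹ := by
    intro h
    have h1 : e * e = 1 := by nth_rewrite 2 [h]; exact mul_inv_cancel₀ he0
    have : (e + 1) ^ 2 = 0 := by linear_combination h1 + (e + 1) * h2
    exact pow_ne_zero 2 he1' this
  have hxy : x ≠ y := by
    intro h; exact hne (by rw [← hye, ← hxe, h])
  have hxy1 : x ≠ y + 1 := by
    intro h
    apply hne
    rw [← hye, ← hxe, h]; linear_combination (y + 1) * h2
  refine ⟨b, hb0, hb1, le_antisymm (upper b hb0 hb1) ?_⟩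
  have hsub : (({x + w, x + w + 1, y + w, y + w + 1} : Finset K) : Set K) ⊆
      {x : K | (x + 1) ^ (3 * q - 2) + x ^ (3 * q - 2) = b} := by
    intro z hz
    simp only [Finset.coe_insert, Finset.coe_singleton, Set.mem_insert_iff,
      Set.mem_singleton_iff] at hz
    rcases hz with rfl | rfl | rfl | rfl
    · exact hX
    · exact plus _ hX
    · exact hY
    · exact plus _ hY
  have hcard : ({x + w, x + w + 1, y + w, y + w + 1} : Finset K).card = 4 := by
    have self : ∀ z : K, z ≠ z + 1 := fun z h => one_ne_zero (by linear_combination -h : (1 : K) = 0)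
    have a1 : x + w ≠ y + w := fun h => hxy (add_right_cancel h)
    have a2 : x + w ≠ y + w + 1 := fun h => hxy1 (by linear_combination h)
    have a3 : x + w + 1 ≠ y + w := fun h => hxy1 (by linear_combination h - h2)
    have a4 : x + w + 1 ≠ y + w + 1 := fun h => a1 (add_right_cancel h)
    rw [Finset.card_insert_of_notMem, Finset.card_insert_of_notMem, Finset.card_pair (self _)]
    · simp only [Finset.mem_insert, Finset.mem_singleton, not_or]
      exact ⟨a3, a4⟩
    · simp only [Finset.mem_insert, Finset.mem_singleton, not_or]
      exact ⟨self _, a1, a2⟩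
  rw [← hcard, ← Set.ncard_coe_finset]
  exact Set.ncard_le_ncard hsub (Set.toFinite _)
end

section
/- Let F(x) = x^{10} be the power function over the finite field F_16 with 16 elements, and for b ∈ F_16 let δ(1, b) denote the number of x ∈ F_16 with F(x + 1) + F(x) = b. Then exactly 12 elements b ∈ F_16 satisfy δ(1, b) = 0, exactly 4 elements b ∈ F_16 satisfy δ(1, b) = 4, and no b ∈ F_16 has δ(1, b) equal to any other nonzero value. -/
/-!
In characteristic 2, `(x + 1) ^ 10 + x ^ 10 = x ^ 8 + x ^ 2 + 1`, so `δ b` counts a fibre of the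
additive map `L x = x ^ 8 + x ^ 2 = (x ^ 4 + x) ^ 2`. Its kernel is the kernel of
`M x = x ^ 4 + x`. That kernel has at most 4 elements, being the roots of a polynomial of degree 4,
and at least 4 because `M ∘ M = 0` gives `16 = |ker M| * |im M| ≤ |ker M| ^ 2`. Hence every
nonempty fibre of `L` is a coset with 4 elements, and `L` has `16 / 4 = 4` values.
-/

/-- The additive map `x ↦ x ^ 4 + x` in characteristic 2. -/
def quarticMap (K : Type*) [Field K] (h2 : (2 : K) = 0) : K →+ K where
  toFun x := x ^ 4 + x
  map_zero' := by simp
  map_add' x y := by linear_combination (2 * x ^ 3 * y + 3 * x ^ 2 * y ^ 2 + 2 * x * y ^ 3) * h2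

/-- The additive map `x ↦ x ^ 8 + x ^ 2`, as the square of `x ^ 4 + x`. -/
def octicMap (K : Type*) [Field K] (h2 : (2 : K) = 0) : K →+ K where
  toFun x := quarticMap K h2 x ^ 2
  map_zero' := by simp
  map_add' x y := by
    rw [map_add]
    linear_combination (quarticMap K h2 x * quarticMap K h2 y) * h2

lemma card_ker_mul_card_range {A : Type*} [AddCommGroup A] (f : A →+ A) :
    Nat.card f.ker * Nat.card f.range = Nat.card A := by
  rw [← AddSubgroup.index_ker, AddSubgroup.card_mul_index]

open Polynomial in
lemma card_ker_quarticMap (K : Type*) [Field K] [Fintype K] (hK : Fintype.card K = 16)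
    (h2 : (2 : K) = 0) : Nat.card (quarticMap K h2).ker = 4 := by
  classical
  have hprod := card_ker_mul_card_range (quarticMap K h2)
  rw [Nat.card_eq_fintype_card (α := K), hK] at hprod
  have hle : Nat.card (quarticMap K h2).range ≤ Nat.card (quarticMap K h2).ker := by
    apply AddSubgroup.card_le_of_le
    rintro _ ⟨x, rfl⟩
    have hx : x ^ 16 = x := hK ▸ FiniteField.pow_card x
    change (x ^ 4 + x) ^ 4 + (x ^ 4 + x) = 0
    linear_combination hx + (2 * x ^ 13 + 3 * x ^ 10 + 2 * x ^ 7 + x ^ 4 + x) * h2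
  have hub : Nat.card (quarticMap K h2).ker ≤ 4 := by
    have hdeg : (X ^ 4 + X : K[X]).natDegree = 4 := by compute_degree!
    have hne : (X ^ 4 + X : K[X]) ≠ 0 := by
      intro h
      simp [h] at hdeg
    have hsub : ((quarticMap K h2).ker : Set K) ⊆ ((X ^ 4 + X : K[X]).roots.toFinset : Set K) := by
      intro x hx
      have hx' : x ^ 4 + x = 0 := hx
      simp [hne, hx']
    calc Nat.card (quarticMap K h2).ker = ((quarticMap K h2).ker : Set K).ncard := rfl
      _ ≤ (X ^ 4 + X : K[X]).roots.toFinset.card := by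
        rw [← Set.ncard_coe_finset]
        exact Set.ncard_le_ncard hsub
      _ ≤ (X ^ 4 + X : K[X]).roots.card := Multiset.toFinset_card_le _
      _ ≤ 4 := (card_roots' _).trans hdeg.le
  nlinarith

/-- For F(x) = x^{10} over F_16, exactly 12 elements b have
δ(1,b) = 0, exactly 4 elements have δ(1,b) = 4, and no other value occurs. -/
theorem stmt_17 (K : Type*) [Field K] [Fintype K] (hK : Fintype.card K = 16)
    (δ : K → ℕ) (hδ : ∀ b : K, δ b = {x : K | (x + 1) ^ 10 + x ^ 10 = b}.ncard) :
    {b : K | δ b = 0}.ncard = 12 ∧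
    {b : K | δ b = 4}.ncard = 4 ∧
    (∀ b : K, δ b = 0 ∨ δ b = 4) := by
  have h2 : (2 : K) = 0 := by
    have h : ((16 : ℕ) : K) = 0 := hK ▸ Nat.cast_card_eq_zero K
    have h' : (2 : K) ^ 4 = 0 := by
      rw [← h]
      norm_num
    exact pow_eq_zero_iff (by norm_num) |>.1 h'
  set L := octicMap K h2 with hL
  have hLx (x : K) : (x + 1) ^ 10 + x ^ 10 = L x + 1 := by
    change _ = (x ^ 4 + x) ^ 2 + 1
    linear_combination (x ^ 10 + 5 * x ^ 9 + 22 * x ^ 8 + 60 * x ^ 7 + 105 * x ^ 6 + 125 * x ^ 5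
      + 105 * x ^ 4 + 60 * x ^ 3 + 22 * x ^ 2 + 5 * x) * h2
  have hker : Nat.card L.ker = 4 := by
    have : L.ker = (quarticMap K h2).ker := by
      ext x
      change quarticMap K h2 x ^ 2 = 0 ↔ quarticMap K h2 x = 0
      simp
    rw [this, card_ker_quarticMap K hK h2]
  have hrange : Nat.card L.range = 4 := by
    have := card_ker_mul_card_range L
    rw [Nat.card_eq_fintype_card (α := K), hK, hker] at this
    omega
  have hfull (b : K) (hb : b - 1 ∈ L.range) : δ b = 4 := by
    obtain ⟨x₀, hx₀⟩ := hb
    have hcoset : {x : K | (x + 1) ^ 10 + x ^ 10 = b} = (x₀ + ·) '' (L.ker : Set K) := by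
      ext x
      simp only [Set.mem_ofPred_eq, hLx, Set.mem_image, SetLike.mem_coe, AddMonoidHom.mem_ker]
      constructor
      · intro h
        exact ⟨x - x₀, by rw [map_sub, hx₀, ← h]; ring, by ring⟩
      · rintro ⟨y, hy, rfl⟩
        rw [map_add, hy, hx₀]
        ring
    rw [hδ, hcoset, Set.ncard_image_of_injective _ (add_right_injective x₀)]
    exact hker
  have hempty (b : K) (hb : b - 1 ∉ L.range) : δ b = 0 := by
    rw [hδ, Set.ncard_eq_zero, Set.eq_empty_iff_forall_notMem]
    intro x hx
    rw [Set.mem_ofPred_eq, hLx] at hx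
    exact hb ⟨x, by rw [← hx]; ring⟩
  have hfour : {b : K | δ b = 4} = (· + 1) '' (L.range : Set K) := by
    ext b
    simp only [Set.mem_ofPred_eq, Set.mem_image, SetLike.mem_coe]
    constructor
    · intro h
      refine ⟨b - 1, ?_, by ring⟩
      by_contra hb
      have := hempty b hb
      omega
    · rintro ⟨y, hy, rfl⟩
      exact hfull _ (by simpa using hy)
  have hall (b : K) : δ b = 0 ∨ δ b = 4 := by
    by_cases hb : b - 1 ∈ L.range
    · exact Or.inr (hfull b hb)
    · exact Or.inl (hempty b hb)
  have hcard4 : {b : K | δ b = 4}.ncard = 4 := by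
    rw [hfour, Set.ncard_image_of_injective _ (add_left_injective 1)]
    exact hrange
  have hzero : {b : K | δ b = 0} = {b : K | δ b = 4}ᶜ := by
    ext b
    have := hall b
    simp only [Set.mem_ofPred_eq, Set.mem_compl_iff]
    omega
  refine ⟨?_, hcard4, hall⟩
  rw [hzero, Set.ncard_compl, hcard4, Nat.card_eq_fintype_card, hK]
end

section
/- Let q = 2^m where m is a positive even integer, and let d = 3q - 2. Suppose b ∈ F_{q^2} with b ≠ 1, and suppose x ∈ F_{q^2} \ F_2 satisfies (x + 1)^d + x^d = b. Then there exist u_1, u_2 ∈ U_{q+1} = {z ∈ F_{q^2} : z^{q+1} = 1} with u_1 ≠ u_2 such that, setting t = u_1 + u_2, one has b = (t^2 + t·(t^q)^{-1} + t^2·(t^q)^{-1})^2 and x = ((u_1 + 1)/(u_1 + u_2))^2. -/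
/-!
Write `x = y ^ 2` and let `Y = y ^ q` be the conjugate of `y` over the subfield with `q` elements.
If `x = ((u₁ + 1) / (u₁ + u₂)) ^ 2` with `u₁, u₂` of norm one, then conjugating
`y = (u₁ + 1) / (u₁ + u₂)` gives `Y = u₂ y`, and conjugating `y + 1 = (u₂ + 1) / (u₁ + u₂)` gives
`Y + 1 = u₁ (y + 1)`. This forces `u₁ = (Y + 1) / (y + 1)` and `u₂ = Y / y`, which do have norm one.
They are distinct exactly when `Y ≠ y`; if `Y = y` then `x ^ q = x`, hence `x ^ (3 q - 2) = x` and
`b = (x + 1) + x = 1`, which is excluded.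

Here `t = (y + Y) / (y (y + 1))` and `t ^ q = (y + Y) / (Y (Y + 1))`, while
`b = (Y ^ 3 / y ^ 2 + (Y + 1) ^ 3 / (y + 1) ^ 2) ^ 2`, so the formula for `b` is an identity of
rational functions in `y` and `Y` in characteristic two.
-/

/-- On squares, raising to the power `3 q - 2` is `y ^ 2 ↦ ((y ^ q) ^ 3 / y ^ 2) ^ 2`. -/
lemma sq_pow_three_mul_sub_two {K : Type*} [Field K] {q : ℕ} (hq : 0 < q) {y : K} (hy : y ≠ 0) :
    (y ^ 2) ^ (3 * q - 2) = ((y ^ q) ^ 3 / y ^ 2) ^ 2 := by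
  rw [div_pow, eq_div_iff (by positivity)]
  simp only [← pow_mul, ← pow_add]
  congr 1
  omega

/-- For q = 2^m (m positive even), d = 3q-2, b ≠ 1, and a solution
x ∉ F_2 of (x+1)^d + x^d = b, there are distinct u₁, u₂ ∈ U_{q+1} such that with
t = u₁ + u₂ one has b = (t² + t·(t^q)⁻¹ + t²·(t^q)⁻¹)² and x = ((u₁+1)/(u₁+u₂))². -/
theorem stmt_19 (m : ℕ) (hm : 0 < m) (hme : Even m) (q : ℕ) (hq : q = 2 ^ m)
    (K : Type*) [Field K] [Fintype K] [CharP K 2] (hK : Fintype.card K = q ^ 2)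
    (b : K) (hb : b ≠ 1) (x : K) (hx0 : x ≠ 0) (hx1 : x ≠ 1)
    (hxb : (x + 1) ^ (3 * q - 2) + x ^ (3 * q - 2) = b) :
    ∃ u₁ u₂ : K, u₁ ^ (q + 1) = 1 ∧ u₂ ^ (q + 1) = 1 ∧ u₁ ≠ u₂ ∧
      (∀ t : K, t = u₁ + u₂ →
        b = (t ^ 2 + t * (t ^ q)⁻¹ + t ^ 2 * (t ^ q)⁻¹) ^ 2) ∧
      x = ((u₁ + 1) / (u₁ + u₂)) ^ 2 := by
  have h2 : (2 : K) = 0 := CharTwo.two_eq_zero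
  have hqpos : 0 < q := hq ▸ Nat.two_pow_pos m
  have hadd (a c : K) : (a + c) ^ q = a ^ q + c ^ q := by
    rw [hq]; exact add_pow_char_pow a c 2 m
  have hconj (a : K) : (a ^ q) ^ q = a := by
    rw [← pow_mul, ← sq, ← hK]; exact FiniteField.pow_card a
  obtain ⟨y, hy⟩ := FiniteField.isSquare_of_char_two (ringChar.eq K 2) x
  rw [← sq] at hy
  have hx1' : x + 1 = (y + 1) ^ 2 := by
    rw [hy]; linear_combination -y * h2
  have hy0 : y ≠ 0 := by
    rintro rfl; exact hx0 (by simp [hy])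
  have hy1 : y + 1 ≠ 0 := fun h => hx1 (by
    rw [h] at hx1'; linear_combination hx1' - h2)
  rw [hx1', hy, sq_pow_three_mul_sub_two hqpos hy1, sq_pow_three_mul_sub_two hqpos hy0, hadd,
    one_pow] at hxb
  obtain ⟨Y, hY⟩ : ∃ Y, Y = y ^ q := ⟨_, rfl⟩
  have hYq : Y ^ q = y := hY ▸ hconj y
  rw [← hY] at hxb
  have hY0 : Y ≠ 0 := hY ▸ pow_ne_zero q hy0
  have hY1q : (y + 1) ^ q = Y + 1 := by rw [hadd, one_pow, hY]
  have hY1 : Y + 1 ≠ 0 := hY1q ▸ pow_ne_zero q hy1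
  have hne : y + Y ≠ 0 := by
    intro h
    have hYy : Y = y := by linear_combination h - y * h2
    apply hb
    rw [← hxb, hYy]
    field_simp
    linear_combination (y ^ 2 + y) * h2
  -- The value `t` of `u₁ + u₂`, and then its conjugate `t ^ q`.
  have ht : (Y + 1) / (y + 1) + Y / y = (y + Y) / (y * (y + 1)) := by
    field_simp
    linear_combination y * Y * h2
  have htq : ((y + Y) / (y * (y + 1))) ^ q = (y + Y) / (Y * (Y + 1)) := by
    rw [div_pow, mul_pow, hadd, hY1q, hYq, ← hY, add_comm]
  refine ⟨(Y + 1) / (y + 1), Y / y, ?_, ?_, ?_, ?_, ?_⟩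
  · rw [pow_succ, div_pow, hY1q, hadd, hYq, one_pow]
    field_simp
  · rw [pow_succ, div_pow, hYq, ← hY]
    field_simp
  · intro h
    have h0 : (y + Y) / (y * (y + 1)) = 0 := by
      rw [← ht, h]; exact CharTwo.add_self_eq_zero _
    exact div_ne_zero hne (mul_ne_zero hy0 hy1) h0
  · rintro t rfl
    rw [ht, htq, ← hxb]
    field_simp
    -- A polynomial identity in `y` and `Y` modulo `h2`.
    grind
  · rw [ht, hy]
    congr 1
    field_simp
    linear_combination -h2
end
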